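/- arXiv:0904.2194 — 4 statements merged into one kernel-verified Lean document; each statement's English description precedes it below -/
import Mathlib

section
/- Let G_0 be an acyclic graph on [n+1] with d edges, let (i,j), (j,k) ∈ E(G_0) with i < j < k, and let G_1, G_2, G_3 be the graphs produced by the reduction of G_0 at this pair. Then G_1, G_2, G_3 are acyclic; C(G_0) = C(G_1) ∪ C(G_2), and the linear spans of C(G_0), C(G_1), C(G_2) each have dimension d; and C(G_3) = C(G_1) ∩ C(G_2), and the linear span of C(G_3) has dimension d − 1. -/
open scoped BigOperators

namespace RPaper

abbrev Vtype (n : ℕ) := Fin (n+1) → ℝ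

abbrev Edge (n : ℕ) := Fin (n+1) × Fin (n+1)

abbrev EdgeSet (n : ℕ) := Finset (Edge n)

/-- The vector `e_i - e_j`. -/
def ev {n : ℕ} (i j : Fin (n+1)) : Vtype n := Pi.single i 1 - Pi.single j 1

/-- Edges are stored as pairs `(i,j)` with `i < j`. -/
def IsGraph {n : ℕ} (E : EdgeSet n) : Prop := ∀ e ∈ E, e.1 < e.2

/-- The simple graph underlying an edge set. -/
def toSG {n : ℕ} (E : EdgeSet n) : SimpleGraph (Fin (n+1)) :=
  SimpleGraph.fromRel (fun a b => (a, b) ∈ E)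

def Acyclic {n : ℕ} (E : EdgeSet n) : Prop := (toSG E).IsAcyclic

def IsForest {n : ℕ} (E : EdgeSet n) : Prop := IsGraph E ∧ Acyclic E

/-- A tree on the full vertex set `[n+1]`: connected and acyclic. -/
def IsTreeG {n : ℕ} (E : EdgeSet n) : Prop := IsGraph E ∧ (toSG E).IsTree

def Noncrossing {n : ℕ} (E : EdgeSet n) : Prop :=
  ¬ ∃ i j k l : Fin (n+1), i < j ∧ j < k ∧ k < l ∧ (i, k) ∈ E ∧ (j, l) ∈ E

def Alternating {n : ℕ} (E : EdgeSet n) : Prop :=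
  ¬ ∃ i j k : Fin (n+1), i < j ∧ j < k ∧ (i, j) ∈ E ∧ (j, k) ∈ E

/-- The positive roots `e_i - e_j`, `i < j`. -/
def PhiPlus (n : ℕ) : Set (Vtype n) := {v | ∃ i j : Fin (n+1), i < j ∧ v = ev i j}

/-- The cone of nonnegative combinations of the vectors of `E`. -/
def cone {n : ℕ} (E : EdgeSet n) : Set (Vtype n) :=
  {x | ∃ c : Edge n → ℝ, (∀ e, 0 ≤ c e) ∧ x = ∑ e ∈ E, c e • ev e.1 e.2}

def Vbar {n : ℕ} (E : EdgeSet n) : Set (Vtype n) := PhiPlus n ∩ cone E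

/-- The root polytope of a graph. -/
def RootPoly {n : ℕ} (E : EdgeSet n) : Set (Vtype n) := convexHull ℝ ({0} ∪ Vbar E)

/-- The full root polytope `P(A_n^+)`. -/
def FullRootPoly (n : ℕ) : Set (Vtype n) := convexHull ℝ ({0} ∪ PhiPlus n)

/-- Transitive closure: `(i,j)`, `i<j`, whenever there is an increasing path in `E`. -/
def closureT {n : ℕ} (E : EdgeSet n) : Set (Edge n) :=
  {p | p.1 < p.2 ∧ Relation.TransGen (fun a b => a < b ∧ (a, b) ∈ E) p.1 p.2}

/-- Noncrossing alternating spanning trees of the transitive closure of `E`. -/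
def NCASpanningTrees {n : ℕ} (E : EdgeSet n) : Set (EdgeSet n) :=
  {F | IsTreeG F ∧ Noncrossing F ∧ Alternating F ∧ ↑F ⊆ closureT E}

/-- The `t`-th dilate of a set. -/
def dilate {n : ℕ} (t : ℕ) (P : Set (Vtype n)) : Set (Vtype n) := (fun x => (t : ℝ) • x) '' P

/-- Number of lattice points of the `t`-th dilate. -/
noncomputable def latticeCount {n : ℕ} (P : Set (Vtype n)) (t : ℕ) : ℕ :=
  Set.ncard {x ∈ dilate t P | ∀ i, ∃ z : ℤ, x i = (z : ℝ)}

/-- Dimension of the affine span of a set. -/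
noncomputable def polyDim {n : ℕ} (P : Set (Vtype n)) : ℕ :=
  Module.finrank ℝ (affineSpan ℝ P).direction

/-- The points `0` and `e_i - e_j`, `(i,j) ∈ F`. -/
def vertSet {n : ℕ} (F : EdgeSet n) : Set (Vtype n) :=
  {0} ∪ {v | ∃ e ∈ F, v = ev e.1 e.2}

/-- A playable route: an increasing vertex sequence whose consecutive pairs are edges. -/
structure PlayableRoute {n : ℕ} (E : EdgeSet n) where
  len : ℕ
  route : Fin (len + 2) → Fin (n+1)
  mono : StrictMono route
  mem : ∀ t : Fin (len + 1), (route t.castSucc, route t.succ) ∈ E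

/-- A set is a simplex if it is the convex hull of a finite affinely independent set. -/
def IsSimplex {n : ℕ} (P : Set (Vtype n)) : Prop :=
  ∃ s : Finset (Vtype n),
    AffineIndependent ℝ (fun x : (s : Set (Vtype n)) => x.1) ∧ P = convexHull ℝ ↑s

/-- The three graphs produced by a reduction at `(i,j), (j,k)`. -/
def red1 {n : ℕ} (E : EdgeSet n) (i j k : Fin (n+1)) : EdgeSet n :=
  insert (i, k) (E.erase (j, k))

def red2 {n : ℕ} (E : EdgeSet n) (i j k : Fin (n+1)) : EdgeSet n :=
  insert (i, k) (E.erase (i, j))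

def red3 {n : ℕ} (E : EdgeSet n) (i j k : Fin (n+1)) : EdgeSet n :=
  insert (i, k) ((E.erase (i, j)).erase (j, k))

/-- The vector of an edge. -/
def vv {n : ℕ} (e : Edge n) : Vtype n := ev e.1 e.2

/-- Explicit linear independence. -/
def LI {n : ℕ} (E : EdgeSet n) : Prop :=
  ∀ c : Edge n → ℝ, ∑ e ∈ E, c e • vv e = 0 → ∀ e ∈ E, c e = 0

lemma ev_add {n : ℕ} (a b c : Fin (n+1)) : ev a b + ev b c = ev a c := by
  simp [ev]

lemma li_of_acyclic {n : ℕ} (E : EdgeSet n) (hE : IsGraph E) (hac : Acyclic E) : LI E := by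
  classical
  intro c hc e he
  have hlt := hE e he
  have hadj : (toSG E).Adj e.1 e.2 := by
    rw [toSG, SimpleGraph.fromRel_adj]
    exact ⟨hlt.ne, Or.inl he⟩
  have hb := (SimpleGraph.isAcyclic_iff_forall_adj_isBridge.1 hac) hadj
  rw [SimpleGraph.isBridge_iff] at hb
  set H := (toSG E).deleteEdges {s(e.1, e.2)} with hH
  let f : Vtype n → ℝ := fun x => ∑ v, if H.Reachable e.1 v then x v else 0
  have hfev : ∀ a b, f (ev a b) = (if H.Reachable e.1 a then 1 else 0)
      - (if H.Reachable e.1 b then 1 else 0) := by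
    intro a b
    simp only [f, ev, Pi.sub_apply]
    rw [← Finset.sum_filter, Finset.sum_sub_distrib]
    simp [Finset.sum_pi_single']
  have hfs : f (∑ e' ∈ E, c e' • vv e') = ∑ e' ∈ E, c e' * f (vv e') := by
    simp only [f, Finset.sum_apply, Pi.smul_apply, smul_eq_mul, Finset.mul_sum]
    rw [Finset.sum_comm]
    refine Finset.sum_congr rfl fun v _ => ?_
    split_ifs <;> simp
  rw [hc] at hfs
  rw [Finset.sum_eq_single e] at hfs
  · have : f (vv e) = 1 := by
      rw [vv, hfev, if_pos (SimpleGraph.Reachable.refl _), if_neg (by simpa using hb)]; simp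
    rw [this] at hfs
    simpa [f] using hfs.symm
  · intro e' he' hne
    have hlt' := hE e' he'
    have hadj' : H.Adj e'.1 e'.2 := by
      rw [hH, SimpleGraph.deleteEdges_adj]
      refine ⟨?_, ?_⟩
      · rw [toSG, SimpleGraph.fromRel_adj]
        exact ⟨hlt'.ne, Or.inl he'⟩
      · simp only [Set.mem_singleton_iff, Sym2.eq_iff]
        rintro (⟨h, h'⟩ | ⟨h, h'⟩)
        · exact hne (Prod.ext h h')
        · rw [h, h'] at hlt'
          exact lt_asymm hlt hlt'
    have hiff : H.Reachable e.1 e'.1 ↔ H.Reachable e.1 e'.2 :=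
      ⟨fun h => h.trans hadj'.reachable, fun h => h.trans hadj'.symm.reachable⟩
    rw [vv, hfev]
    simp [hiff]
  · exact fun h => absurd he h

lemma not_mem_span {n : ℕ} (E : EdgeSet n) (h : LI E) (e : Edge n) (he : e ∈ E) :
    vv e ∉ Submodule.span ℝ (vv '' (↑(E.erase e) : Set (Edge n))) := by
  classical
  intro hm
  rw [Finsupp.mem_span_image_iff_linearCombination] at hm
  obtain ⟨l, hl, hc⟩ := hm
  rw [Finsupp.linearCombination_apply, Finsupp.sum_of_support_subset l (s := E.erase e) (by exact_mod_cast (Finsupp.mem_supported _ _).1 hl) _ (by simp)] at hc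
  have := h (fun x => if x = e then -1 else l x) ?_ e he
  · simp at this
  · rw [← Finset.add_sum_erase _ _ he]
    rw [Finset.sum_congr rfl (g := fun x => l x • vv x)]
    · rw [hc]; simp
    · intro x hx
      rw [if_neg (Finset.ne_of_mem_erase hx)]

lemma acyclic_of_li {n : ℕ} (E : EdgeSet n) (h : LI E) : Acyclic E := by
  classical
  unfold Acyclic
  rw [SimpleGraph.isAcyclic_iff_forall_adj_isBridge]
  have key : ∀ e ∈ E, ¬ ((toSG E).deleteEdges {s(e.1, e.2)}).Reachable e.1 e.2 := by
    intro e he hr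
    apply not_mem_span E h e he
    have gen : ∀ u v, ((toSG E).deleteEdges {s(e.1, e.2)}).Reachable u v →
        ev u v ∈ Submodule.span ℝ (vv '' (↑(E.erase e) : Set (Edge n))) := by
      rintro u v ⟨w⟩
      induction w with
      | nil => simp [ev]
      | @cons a b d hab _ ih =>
        rw [← ev_add a b d]
        refine Submodule.add_mem _ ?_ ih
        rw [SimpleGraph.deleteEdges_adj, toSG, SimpleGraph.fromRel_adj] at hab
        obtain ⟨⟨_, h1 | h1⟩, h3⟩ := hab
        · refine Submodule.subset_span ⟨(a, b), ?_, rfl⟩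
          rw [Finset.mem_coe, Finset.mem_erase]
          exact ⟨fun hh => h3 (by simp [← hh]), h1⟩
        · have : ev a b = - vv (b, a) := by simp [vv, ev]
          rw [this]
          refine Submodule.neg_mem _ (Submodule.subset_span ⟨(b, a), ?_, rfl⟩)
          rw [Finset.mem_coe, Finset.mem_erase]
          exact ⟨fun hh => h3 (by simp [← hh, Sym2.eq_swap]), h1⟩
    exact gen _ _ hr
  intro a b hab
  rw [SimpleGraph.isBridge_iff]
  rw [toSG, SimpleGraph.fromRel_adj] at hab
  obtain ⟨_, h1 | h1⟩ := hab
  · exact key (a, b) h1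
  · intro hr
    apply key (b, a) h1
    rw [Sym2.eq_swap] at hr
    exact hr.symm

lemma finrank_cone {n : ℕ} (E : EdgeSet n) (h : LI E) :
    Module.finrank ℝ (Submodule.span ℝ (cone E)) = E.card := by
  classical
  have hs : Submodule.span ℝ (cone E) =
      Submodule.span ℝ (Set.range (fun e : E => vv (e : Edge n))) := by
    apply le_antisymm
    · rw [Submodule.span_le]
      rintro x ⟨c, _, rfl⟩
      refine Submodule.sum_mem _ fun e he => Submodule.smul_mem _ _ ?_
      exact Submodule.subset_span ⟨⟨e, he⟩, rfl⟩
    · rw [Submodule.span_le]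
      rintro _ ⟨⟨e, he⟩, rfl⟩
      refine Submodule.subset_span ⟨fun x => if x = e then 1 else 0, ?_, ?_⟩
      · intro x; dsimp only; split_ifs <;> norm_num
      · simp [he, vv]
  have hli : LinearIndependent ℝ (fun e : E => vv (e : Edge n)) := by
    have : LinearIndepOn ℝ (vv (n := n)) (E : Set (Edge n)) := by
      rw [linearIndepOn_finset_iff]
      exact h
    exact this
  rw [hs, finrank_span_eq_card hli]
  simp

lemma cone_insert {n : ℕ} (F : EdgeSet n) (a : Edge n) (ha : a ∉ F) (x : Vtype n) :
    x ∈ cone (insert a F) ↔ ∃ s : ℝ, 0 ≤ s ∧ ∃ y ∈ cone F, x = s • vv a + y := by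
  classical
  constructor
  · rintro ⟨c, hc, rfl⟩
    exact ⟨c a, hc a, _, ⟨c, hc, rfl⟩, by rw [Finset.sum_insert ha]; rfl⟩
  · rintro ⟨s, hs, _, ⟨c, hc, rfl⟩, rfl⟩
    refine ⟨fun e => if e = a then s else c e, ?_, ?_⟩
    · intro e; dsimp only; split_ifs <;> simp [hs, hc]
    · rw [Finset.sum_insert ha]
      dsimp only
      rw [if_pos rfl]
      congr 1
      refine Finset.sum_congr rfl fun e he => ?_
      have q1 : e ≠ a := fun h => ha (h ▸ he)
      simp [q1]

lemma li_insert2 {n : ℕ} (F : EdgeSet n) (a b : Edge n) (hab : a ≠ b) (ha : a ∉ F) (hb : b ∉ F)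
    (h : LI (insert a (insert b F))) (s t : ℝ) (c : Edge n → ℝ)
    (h0 : s • vv a + (t • vv b + ∑ e ∈ F, c e • vv e) = 0) :
    s = 0 ∧ t = 0 ∧ ∀ e ∈ F, c e = 0 := by
  classical
  have ha' : a ∉ insert b F := by simp [hab, ha]
  have := h (fun e => if e = a then s else if e = b then t else c e) ?_
  · refine ⟨by simpa using this a (by simp), by simpa [hab.symm] using this b (by simp), ?_⟩
    intro e he
    have h3 := this e (by simp [he])
    have q1 : e ≠ a := fun h => ha (h ▸ he)
    have q2 : e ≠ b := fun h => hb (h ▸ he)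
    simpa [q1, q2] using h3
  · rw [Finset.sum_insert ha', Finset.sum_insert hb, if_pos rfl, if_neg hab.symm, if_pos rfl,
      ← h0]
    congr 2
    refine Finset.sum_congr rfl fun e he => ?_
    have q1 : e ≠ a := fun h => ha (h ▸ he)
    have q2 : e ≠ b := fun h => hb (h ▸ he)
    simp [q1, q2]

/- STATEMENT 5 -/
theorem stmt5 {n : ℕ} (hn : 1 ≤ n) (E : EdgeSet n) (hE : IsGraph E) (hac : Acyclic E)
    (d : ℕ) (hd : E.card = d) (i j k : Fin (n+1)) (hij : i < j) (hjk : j < k)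
    (h1 : (i, j) ∈ E) (h2 : (j, k) ∈ E) :
    (Acyclic (red1 E i j k) ∧ Acyclic (red2 E i j k) ∧ Acyclic (red3 E i j k)) ∧
    cone E = cone (red1 E i j k) ∪ cone (red2 E i j k) ∧
    (Module.finrank ℝ (Submodule.span ℝ (cone E)) = d ∧
      Module.finrank ℝ (Submodule.span ℝ (cone (red1 E i j k))) = d ∧
      Module.finrank ℝ (Submodule.span ℝ (cone (red2 E i j k))) = d) ∧
    cone (red3 E i j k) = cone (red1 E i j k) ∩ cone (red2 E i j k) ∧
    Module.finrank ℝ (Submodule.span ℝ (cone (red3 E i j k))) = d - 1 := by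
  classical
  have hli := li_of_acyclic E hE hac
  have hik : i < k := hij.trans hjk
  obtain ⟨F, hF⟩ : ∃ F, F = (E.erase (i, j)).erase (j, k) := ⟨_, rfl⟩
  have nab : ((i, j) : Edge n) ≠ (j, k) := fun h => hij.ne (Prod.ext_iff.1 h).1
  have nga : ((i, k) : Edge n) ≠ (i, j) := fun h => hjk.ne' (Prod.ext_iff.1 h).2
  have ngb : ((i, k) : Edge n) ≠ (j, k) := fun h => hij.ne (Prod.ext_iff.1 h).1
  have haF : ((i, j) : Edge n) ∉ F := by simp [hF]
  have hbF : ((j, k) : Edge n) ∉ F := by simp [hF]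
  have hEF : E = insert (i, j) (insert (j, k) F) := by
    rw [hF, Finset.insert_erase (by simp [h2, nab.symm]), Finset.insert_erase h1]
  have hv : vv ((i, k) : Edge n) = vv (i, j) + vv (j, k) := (ev_add i j k).symm
  have hgF : ((i, k) : Edge n) ∉ F := by
    intro hg
    rw [hEF] at hli
    have := li_insert2 F _ _ nab haF hbF hli 1 1 (fun e => if e = (i, k) then -1 else 0) (by
      simp [hg, hv])
    norm_num at this
  have e1 : red1 E i j k = insert (i, k) (insert (i, j) F) := by
    rw [red1, hF, Finset.erase_right_comm, Finset.insert_erase (by simp [h1, nab])]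
  have e2 : red2 E i j k = insert (i, k) (insert (j, k) F) := by
    rw [red2, hF, Finset.insert_erase (by simp [h2, nab.symm])]
  have e3 : red3 E i j k = insert (i, k) F := by rw [red3, hF]
  rw [e1, e2, e3]
  have hga : ((i, k) : Edge n) ∉ insert (i, j) F := by
    rw [Finset.mem_insert]; exact fun h => h.elim nga hgF
  have hgb : ((i, k) : Edge n) ∉ insert (j, k) F := by
    rw [Finset.mem_insert]; exact fun h => h.elim ngb hgF
  have hab : ((i, j) : Edge n) ∉ insert (j, k) F := by
    rw [Finset.mem_insert]; exact fun h => h.elim nab haF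
  rw [hEF] at hli
  have key := li_insert2 F _ _ nab haF hbF hli
  have cE : F.card + 2 = d := by
    rw [← hd, hEF, Finset.card_insert_of_notMem hab, Finset.card_insert_of_notMem hbF]
  have L1 : LI (insert (i, k) (insert (i, j) F)) := by
    intro c hc
    rw [Finset.sum_insert hga, Finset.sum_insert haF, hv] at hc
    obtain ⟨p, q, r⟩ := key (c (i, k) + c (i, j)) (c (i, k)) c (by rw [← hc]; module)
    simp only [Finset.forall_mem_insert]
    exact ⟨q, by linarith, r⟩
  have L2 : LI (insert (i, k) (insert (j, k) F)) := by
    intro c hc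
    rw [Finset.sum_insert hgb, Finset.sum_insert hbF, hv] at hc
    obtain ⟨p, q, r⟩ := key (c (i, k)) (c (i, k) + c (j, k)) c (by rw [← hc]; module)
    simp only [Finset.forall_mem_insert]
    exact ⟨p, by linarith, r⟩
  have L3 : LI (insert (i, k) F) := by
    intro c hc
    rw [Finset.sum_insert hgF, hv] at hc
    obtain ⟨p, q, r⟩ := key (c (i, k)) (c (i, k)) c (by rw [← hc]; module)
    simp only [Finset.forall_mem_insert]
    exact ⟨p, r⟩
  refine ⟨⟨acyclic_of_li _ L1, acyclic_of_li _ L2, acyclic_of_li _ L3⟩, ?_, ⟨?_, ?_, ?_⟩, ?_, ?_⟩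
  · ext x
    rw [Set.mem_union, hEF]
    simp only [cone_insert _ _ hab, cone_insert _ _ hbF, cone_insert _ _ hga, cone_insert _ _ haF,
      cone_insert _ _ hgb, hv]
    constructor
    · rintro ⟨s, hs, _, ⟨t, ht, y, hy, rfl⟩, rfl⟩
      rcases le_total t s with h | h
      · exact Or.inl ⟨t, ht, _, ⟨s - t, by linarith, y, hy, rfl⟩, by module⟩
      · exact Or.inr ⟨s, hs, _, ⟨t - s, by linarith, y, hy, rfl⟩, by module⟩
    · rintro (⟨s, hs, _, ⟨t, ht, y, hy, rfl⟩, rfl⟩ | ⟨s, hs, _, ⟨t, ht, y, hy, rfl⟩, rfl⟩)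
      · exact ⟨s + t, by linarith, _, ⟨s, hs, y, hy, rfl⟩, by module⟩
      · exact ⟨s, hs, _, ⟨s + t, by linarith, y, hy, rfl⟩, by module⟩
  · rw [hEF, finrank_cone _ hli, ← hEF, hd]
  · rw [finrank_cone _ L1, Finset.card_insert_of_notMem hga, Finset.card_insert_of_notMem haF, cE]
  · rw [finrank_cone _ L2, Finset.card_insert_of_notMem hgb, Finset.card_insert_of_notMem hbF, cE]
  · ext x
    rw [Set.mem_inter_iff]
    simp only [cone_insert _ _ hgF, cone_insert _ _ hbF, cone_insert _ _ hga, cone_insert _ _ haF,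
      cone_insert _ _ hgb]
    constructor
    · rintro ⟨s, hs, y, hy, rfl⟩
      exact ⟨⟨s, hs, _, ⟨0, le_rfl, y, hy, rfl⟩, by module⟩,
        ⟨s, hs, _, ⟨0, le_rfl, y, hy, rfl⟩, by module⟩⟩
    · rintro ⟨⟨s, hs, _, ⟨t, ht, y, hy, rfl⟩, rfl⟩, ⟨s', hs', _, ⟨t', ht', y', hy', rfl⟩, hx⟩⟩
      obtain ⟨c, hc, rfl⟩ := hy
      obtain ⟨c', hc', rfl⟩ := hy'
      obtain ⟨p, q, -⟩ := key (s + t - s') (s - s' - t') (fun e => c e - c' e) (by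
        have hx' := sub_eq_zero.2 hx
        simp only [sub_smul (c _), Finset.sum_sub_distrib]
        rw [hv] at hx'
        rw [← hx']
        simp only [vv]
        module)
      have : t = 0 := by linarith
      exact ⟨s, hs, _, ⟨c, hc, rfl⟩, by rw [this]; module⟩
  · rw [finrank_cone _ L3, Finset.card_insert_of_notMem hgF, ← cE]
    omega

end RPaper
end

section
/- Let G be a graph on [n+1]. Suppose S and S' are finite collections of linearly independent subsets of Φ⁺ such that the relative interior of P(G) is the disjoint union, over A ∈ S, of the relative interiors of the simplices conv({0} ∪ A), and likewise the relative interior of P(G) is the disjoint union, over A ∈ S', of the relative interiors of the simplices conv({0} ∪ A). Then for every i ≥ 0, the number of sets A ∈ S with |A| = i equals the number of sets A ∈ S' with |A| = i. -/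
open scoped BigOperators

namespace RPaper

theorem relint_image {X V : Type*} [TopologicalSpace X] [NormedAddCommGroup V] [NormedSpace ℝ V]
    (f : X → V) (hf : Topology.IsEmbedding f) (s : Set V)
    (hr : Set.range f = (affineSpan ℝ s : Set V)) :
    intrinsicInterior ℝ s = f '' interior (f ⁻¹' s) := by
  let h : X ≃ₜ (affineSpan ℝ s) := hf.toHomeomorph.trans (Homeomorph.setCongr hr)
  have hh : ∀ x, ((h x : affineSpan ℝ s) : V) = f x := fun x => rfl
  unfold intrinsicInterior
  have h1 : f ⁻¹' s = h ⁻¹' (((↑) : affineSpan ℝ s → V) ⁻¹' s) := by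
    ext x; simp [hh]
  rw [h1, ← h.preimage_interior]
  ext v
  constructor
  · rintro ⟨y, hy, rfl⟩
    refine ⟨h.symm y, by simpa using hy, ?_⟩
    rw [← hh]; simp
  · rintro ⟨x, hx, rfl⟩
    exact ⟨h x, hx, hh x⟩

theorem interior_simplex {ι : Type*} [Fintype ι] :
    interior {c : ι → ℝ | (∀ a, 0 ≤ c a) ∧ ∑ a, c a ≤ 1} =
      {c : ι → ℝ | (∀ a, 0 < c a) ∧ ∑ a, c a < 1} := by
  classical
  apply Set.Subset.antisymm
  · intro c hc
    have key : ∀ v : ι → ℝ, ∃ t : ℝ, 0 < t ∧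
        c + t • v ∈ {c : ι → ℝ | (∀ a, 0 ≤ c a) ∧ ∑ a, c a ≤ 1} := by
      intro v
      have hcont : Filter.Tendsto (fun t : ℝ => c + t • v) (nhds 0) (nhds c) := by
        have : Continuous (fun t : ℝ => c + t • v) := by fun_prop
        simpa using this.tendsto 0
      have hev := hcont (mem_interior_iff_mem_nhds.1 hc)
      have hev2 : ∀ᶠ t in nhdsWithin (0:ℝ) (Set.Ioi 0),
          c + t • v ∈ {c : ι → ℝ | (∀ a, 0 ≤ c a) ∧ ∑ a, c a ≤ 1} := nhdsWithin_le_nhds hev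
      obtain ⟨t, ht, h0⟩ := (hev2.and self_mem_nhdsWithin).exists
      exact ⟨t, h0, ht⟩
    refine ⟨fun a => ?_, ?_⟩
    · obtain ⟨t, ht, h, -⟩ := key (Pi.single a (-1))
      have := h a
      simp at this
      linarith
    · obtain ⟨t, ht, h, h2⟩ := key (fun _ => 1)
      rcases isEmpty_or_nonempty ι with he | hne
      · simp
      · have hc : (0:ℝ) < Fintype.card ι := by exact_mod_cast Fintype.card_pos
        simp [Finset.sum_add_distrib] at h2
        nlinarith
  · apply interior_maximal
    · rintro c ⟨h1, h2⟩
      exact ⟨fun a => (h1 a).le, h2.le⟩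
    · have : {c : ι → ℝ | (∀ a, 0 < c a) ∧ ∑ a, c a < 1} =
        (⋂ a, {c : ι → ℝ | 0 < c a}) ∩ {c : ι → ℝ | ∑ a, c a < 1} := by
          ext; simp
      rw [this]
      apply IsOpen.inter
      · exact isOpen_iInter_of_finite fun a => isOpen_lt continuous_const (continuous_apply a)
      · exact isOpen_lt (by fun_prop) continuous_const

theorem hull_mem {n : ℕ} (A : Finset (Vtype n)) (x : Vtype n) (h0 : (0 : Vtype n) ∉ A) :
    x ∈ convexHull ℝ (insert (0 : Vtype n) (A : Set (Vtype n))) ↔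
      ∃ c : A → ℝ, (∀ a, 0 ≤ c a) ∧ ∑ a, c a ≤ 1 ∧ ∑ a, c a • (a : Vtype n) = x := by
  classical
  rw [← Finset.coe_insert, Finset.mem_convexHull']
  constructor
  · rintro ⟨w, h1, h2, h3⟩
    rw [Finset.sum_insert h0] at h2 h3
    refine ⟨fun a => w a, fun a => h1 _ (by simp), ?_, ?_⟩
    · have := h1 0 (by simp)
      rw [Finset.sum_coe_sort A w]
      linarith
    · rw [Finset.sum_coe_sort A (fun a => w a • a)]
      simpa using h3
  · rintro ⟨c, h1, h2, h3⟩
    have hs : ∑ a ∈ A, (if h : a ∈ A then c ⟨a, h⟩ else 1 - ∑ a, c a) = ∑ a, c a := by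
      rw [← Finset.sum_coe_sort]; simp
    refine ⟨fun a => if h : a ∈ A then c ⟨a, h⟩ else 1 - ∑ a, c a, ?_, ?_, ?_⟩
    · intro y _
      dsimp only
      split_ifs
      · exact h1 _
      · linarith
    · rw [Finset.sum_insert h0, hs]; simp [h0]
    · rw [Finset.sum_insert h0, smul_zero, zero_add, ← h3]
      refine (Finset.sum_coe_sort A (fun y => (if h : y ∈ A then c ⟨y, h⟩
        else 1 - ∑ a, c a) • y)).symm.trans ?_
      exact Finset.sum_congr rfl fun a _ => by simp

theorem relint_mem {n : ℕ} (A : Finset (Vtype n))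
    (hA : LinearIndependent ℝ (fun x : (A : Set (Vtype n)) => x.1)) (x : Vtype n) :
    x ∈ intrinsicInterior ℝ (convexHull ℝ (insert (0 : Vtype n) (A : Set (Vtype n)))) ↔
      ∃ c : A → ℝ, (∀ a, 0 < c a) ∧ ∑ a, c a < 1 ∧ ∑ a, c a • (a : Vtype n) = x := by
  have h0 : (0 : Vtype n) ∉ A := fun h => hA.ne_zero ⟨0, h⟩ rfl
  have hA' : LinearIndependent ℝ (fun a : A => (a : Vtype n)) := hA
  let f : (A → ℝ) →ₗ[ℝ] Vtype n := Fintype.linearCombination ℝ (fun a : A => (a : Vtype n))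
  have hf : ∀ c, f c = ∑ a, c a • (a : Vtype n) := fun c => Fintype.linearCombination_apply ..
  have hinj : Function.Injective f := hA'.fintypeLinearCombination_injective
  have hemb : Topology.IsEmbedding f :=
    (LinearMap.isClosedEmbedding_of_injective (LinearMap.ker_eq_bot.2 hinj)).isEmbedding
  have hpre : f ⁻¹' (convexHull ℝ (insert (0 : Vtype n) (A : Set (Vtype n)))) =
      {c : A → ℝ | (∀ a, 0 ≤ c a) ∧ ∑ a, c a ≤ 1} := by
    ext c
    simp only [Set.mem_preimage, hull_mem A _ h0, Set.mem_ofPred_eq]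
    constructor
    · rintro ⟨d, h1, h2, h3⟩
      rw [← hf] at h3
      rw [← hinj h3]; exact ⟨h1, h2⟩
    · rintro ⟨h1, h2⟩
      exact ⟨c, h1, h2, (hf c).symm⟩
  rw [relint_image f hemb, hpre, interior_simplex]
  · simp only [Set.mem_image, Set.mem_ofPred_eq, hf, and_assoc]
  · rw [affineSpan_convexHull, affineSpan_insert_zero]
    have : LinearMap.range f = Submodule.span ℝ (Set.range (fun a : A => (a : Vtype n))) :=
      Fintype.range_linearCombination ..
    have h2 : Set.range (fun a : A => (a : Vtype n)) = (A : Set (Vtype n)) := by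
      ext; simp
    rw [h2] at this
    rw [← this]; rfl

theorem unimod {n : ℕ} (A : Finset (Vtype n)) (hP : (A : Set (Vtype n)) ⊆ PhiPlus n)
    (hA : LinearIndependent ℝ (fun x : (A : Set (Vtype n)) => x.1)) (c : A → ℝ)
    (hx : ∀ k, ∃ z : ℤ, (∑ a, c a • (a : Vtype n)) k = z) (a : A) : ∃ z : ℤ, c a = z := by
  classical
  obtain ⟨i, j, hij, hv⟩ := hP a.2
  let W := Submodule.span ℝ ((A : Set (Vtype n)) \ {(a : Vtype n)})
  let K : Finset (Fin (n+1)) := Finset.univ.filter fun k => ev i k ∈ W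
  have hnot : (a : Vtype n) ∉ W := by
    have h := hA.notMem_span_image (s := {a}ᶜ) (x := a) (by simp)
    have h2 : (fun x : (A : Set (Vtype n)) => x.1) '' {a}ᶜ = (A : Set (Vtype n)) \ {(a : Vtype n)} := by
      ext v
      simp only [Set.mem_image, Set.mem_compl_iff, Set.mem_singleton_iff, Set.mem_sdiff]
      constructor
      · rintro ⟨y, hy, rfl⟩
        exact ⟨y.2, fun h => hy (Subtype.ext h)⟩
      · rintro ⟨h1, h2⟩
        exact ⟨⟨v, h1⟩, fun h => h2 (congrArg Subtype.val h), rfl⟩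
    rw [h2] at h
    exact h
  have hev : ∀ p q : Fin (n+1), ∑ k ∈ K, ev p q k =
      (if p ∈ K then (1:ℝ) else 0) - (if q ∈ K then 1 else 0) := by
    intro p q
    simp [ev, Finset.sum_sub_distrib, Pi.single_apply]
  have hφ : ∀ b : A, ∑ k ∈ K, (b : Vtype n) k = if b = a then 1 else 0 := by
    intro b
    by_cases hb : b = a
    · subst hb
      rw [if_pos rfl, hv, hev, if_pos, if_neg]
      · simp
      · simp only [K, Finset.mem_filter, Finset.mem_univ, true_and]
        rw [← hv]; exact hnot
      · simp only [K, Finset.mem_filter, Finset.mem_univ, true_and]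
        have : ev i i = 0 := by simp [ev]
        rw [this]; exact W.zero_mem
    · rw [if_neg hb]
      obtain ⟨p, q, hpq, hbv⟩ := hP b.2
      have hbW : ev p q ∈ W := by
        rw [← hbv]
        exact Submodule.subset_span ⟨b.2, fun h => hb (Subtype.ext h)⟩
      have hiff : p ∈ K ↔ q ∈ K := by
        simp only [K, Finset.mem_filter, Finset.mem_univ, true_and]
        have : ev i q = ev i p + ev p q := by simp [ev]
        rw [this]
        exact (W.add_mem_iff_left hbW).symm
      rw [hbv, hev]
      simp [hiff]
  have hc : c a = ∑ k ∈ K, (∑ b, c b • (b : Vtype n)) k := by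
    simp only [Finset.sum_apply, Pi.smul_apply, smul_eq_mul]
    rw [Finset.sum_comm]
    simp [← Finset.mul_sum, hφ]
  choose z hz using hx
  refine ⟨∑ k ∈ K, z k, ?_⟩
  rw [hc]
  push_cast
  exact Finset.sum_congr rfl fun k _ => hz k

/-- Integer points of the `t`-th dilate. -/
def latt {n : ℕ} (t : ℕ) (P : Set (Vtype n)) : Set (Vtype n) :=
  {x | ((t : ℝ)⁻¹ • x) ∈ P ∧ ∀ k, ∃ z : ℤ, x k = z}

/-- Coefficient vectors. -/
def coef (ι : Type*) [Fintype ι] (t : ℕ) : Set (ι → ℤ) :=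
  {c | (∀ a, 0 < c a) ∧ ∑ a, c a < t}

theorem coef_finite (ι : Type*) [Fintype ι] (t : ℕ) : (coef ι t).Finite := by
  classical
  apply (Set.finite_Icc (0 : ι → ℤ) (fun _ => (t:ℤ))).subset
  rintro c ⟨h1, h2⟩
  refine ⟨fun a => (h1 a).le, fun a => ?_⟩
  have := Finset.single_le_sum (f := c) (fun i _ => (h1 i).le) (Finset.mem_univ a)
  show c a ≤ t
  linarith

theorem coef_ncard (ι : Type*) [Fintype ι] (t : ℕ) :
    (coef ι t).ncard = (coef (Fin (Fintype.card ι)) t).ncard := by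
  let e := Fintype.equivFin ι
  let g := e.arrowCongr (Equiv.refl ℤ)
  have : coef (Fin (Fintype.card ι)) t = g '' coef ι t := by
    rw [Equiv.image_eq_preimage_symm]
    ext c
    have h1 : ∀ a, g.symm c a = c (e a) := fun a => rfl
    simp only [coef, Set.mem_ofPred_eq, Set.mem_preimage, h1]
    rw [Equiv.sum_comp e c, e.forall_congr_left]
    simp
  rw [this, Set.ncard_image_of_injective _ g.injective]

theorem coef_empty (k t : ℕ) (h : t ≤ k) : (coef (Fin k) t).ncard = 0 := by
  have : coef (Fin k) t = ∅ := by
    ext c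
    simp only [coef, Set.mem_ofPred_eq, Set.mem_empty_iff_false, iff_false, not_and, not_lt]
    intro h1
    have := Finset.card_nsmul_le_sum Finset.univ c 1 (fun a _ => h1 a)
    simp at this
    have h2 : (t:ℤ) ≤ k := by exact_mod_cast h
    exact h2.trans this
  simp [this]

theorem coef_pos (k : ℕ) : 0 < (coef (Fin k) (k+1)).ncard := by
  rw [Set.ncard_pos (coef_finite _ _)]
  exact ⟨fun _ => 1, by simp [coef]⟩

theorem latt_eq {n : ℕ} (A : Finset (Vtype n)) (hP : (A : Set (Vtype n)) ⊆ PhiPlus n)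
    (hA : LinearIndependent ℝ (fun x : (A : Set (Vtype n)) => x.1)) (t : ℕ) (ht : 0 < t) :
    latt t (intrinsicInterior ℝ (convexHull ℝ (insert (0 : Vtype n) (A : Set (Vtype n))))) =
      (fun c : A → ℤ => ∑ a, (c a : ℝ) • (a : Vtype n)) '' coef A t := by
  have ht' : (0:ℝ) < t := by exact_mod_cast ht
  ext x
  simp only [latt, Set.mem_ofPred_eq, relint_mem A hA, Set.mem_image]
  constructor
  · rintro ⟨⟨c, h1, h2, h3⟩, hz⟩
    have hx : ∑ a, ((t:ℝ) * c a) • (a : Vtype n) = x := by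
      simp only [mul_smul]
      rw [← Finset.smul_sum, h3, smul_smul, mul_inv_cancel₀ ht'.ne', one_smul]
    have hi := unimod A hP hA (fun a => (t:ℝ) * c a) (by rw [hx]; exact hz)
    choose d hd using hi
    refine ⟨d, ⟨fun a => ?_, ?_⟩, ?_⟩
    · have : (0:ℝ) < d a := by rw [← hd]; exact mul_pos ht' (h1 a)
      exact_mod_cast this
    · have : ((∑ a, d a : ℤ) : ℝ) < t := by
        push_cast
        simp only [← hd]
        rw [← Finset.mul_sum]
        nlinarith
      exact_mod_cast this
    · simp only [← hd]; exact hx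
  · rintro ⟨d, ⟨h1, h2⟩, rfl⟩
    refine ⟨⟨fun a => (t:ℝ)⁻¹ * d a, fun a => ?_, ?_, ?_⟩, ?_⟩
    · have : (0:ℝ) < d a := by exact_mod_cast h1 a
      positivity
    · have : ((∑ a, d a : ℤ) : ℝ) < t := by exact_mod_cast h2
      push_cast at this
      rw [← Finset.mul_sum, inv_mul_lt_iff₀ ht']
      simpa using this
    · simp only [mul_smul, Finset.smul_sum]
    · intro k
      have hk : ∀ a : A, ∃ z : ℤ, (a : Vtype n) k = z := by
        intro a
        obtain ⟨i, j, -, hv⟩ := hP a.2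
        refine ⟨(if k = i then 1 else 0) - (if k = j then 1 else 0), ?_⟩
        rw [hv]
        simp [ev, Pi.single_apply]
      choose z hz using hk
      refine ⟨∑ a, d a * z a, ?_⟩
      simp [hz]

theorem latt_ncard {n : ℕ} (A : Finset (Vtype n)) (hP : (A : Set (Vtype n)) ⊆ PhiPlus n)
    (hA : LinearIndependent ℝ (fun x : (A : Set (Vtype n)) => x.1)) (t : ℕ) (ht : 0 < t) :
    (latt t (intrinsicInterior ℝ (convexHull ℝ (insert (0 : Vtype n) (A : Set (Vtype n)))))).Finite ∧
    (latt t (intrinsicInterior ℝ (convexHull ℝ (insert (0 : Vtype n) (A : Set (Vtype n)))))).ncard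
      = (coef (Fin A.card) t).ncard := by
  rw [latt_eq A hP hA t ht]
  refine ⟨(coef_finite _ _).image _, ?_⟩
  rw [Set.ncard_image_of_injective, coef_ncard, Fintype.card_coe]
  have hA' : LinearIndependent ℝ (fun a : A => (a : Vtype n)) := hA
  have hinj := hA'.fintypeLinearCombination_injective
  intro c d h
  have := @hinj (fun a => (c a : ℝ)) (fun a => (d a : ℝ)) (by
    simpa only [Fintype.linearCombination_apply] using h)
  funext a
  exact_mod_cast congrFun this a

theorem total {n : ℕ} (P : Set (Vtype n)) (S : Finset (Finset (Vtype n)))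
    (hS : ∀ A ∈ S, ↑A ⊆ PhiPlus n ∧
      LinearIndependent ℝ (fun x : (A : Set (Vtype n)) => x.1))
    (hcov : P = ⋃ A ∈ S, intrinsicInterior ℝ (convexHull ℝ (insert (0 : Vtype n) ↑A)))
    (hdisj : (S : Set (Finset (Vtype n))).Pairwise fun A B =>
      Disjoint (intrinsicInterior ℝ (convexHull ℝ (insert (0 : Vtype n) ↑A)))
        (intrinsicInterior ℝ (convexHull ℝ (insert (0 : Vtype n) ↑B))))
    (t : ℕ) (ht : 0 < t) :
    (latt t P).ncard = ∑ A ∈ S, (coef (Fin A.card) t).ncard := by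
  have h1 : latt t P = ⋃ A ∈ (S : Set (Finset (Vtype n))),
      latt t (intrinsicInterior ℝ (convexHull ℝ (insert (0 : Vtype n) (A : Set (Vtype n))))) := by
    subst hcov
    ext x
    simp only [latt, Set.mem_ofPred_eq, Set.mem_iUnion, Finset.mem_coe, exists_prop]
    tauto
  rw [h1, Set.Finite.ncard_biUnion S.finite_toSet, finsum_mem_coe_finset]
  · exact Finset.sum_congr rfl fun A hA => (latt_ncard A (hS A hA).1 (hS A hA).2 t ht).2
  · exact fun A hA => (latt_ncard A (hS A hA).1 (hS A hA).2 t ht).1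
  · intro A hA B hB hAB
    have := hdisj hA hB hAB
    rw [Function.onFun, Set.disjoint_left]
    intro x hx hy
    exact Set.disjoint_left.1 this hx.1 hy.1

theorem split_sum {n : ℕ} (S : Finset (Finset (Vtype n))) (i : ℕ) :
    ∑ A ∈ S, (coef (Fin A.card) (i+1)).ncard =
      ∑ k ∈ Finset.range (i+1), (S.filter fun A => A.card = k).card * (coef (Fin k) (i+1)).ncard := by
  have h1 : ∀ A ∈ S, (coef (Fin A.card) (i+1)).ncard =
      ∑ k ∈ Finset.range (i+1), if A.card = k then (coef (Fin k) (i+1)).ncard else 0 := by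
    intro A _
    rw [Finset.sum_ite_eq]
    split_ifs with h
    · rfl
    · exact coef_empty _ _ (by simpa using h)
  rw [Finset.sum_congr rfl h1, Finset.sum_comm]
  refine Finset.sum_congr rfl fun k _ => ?_
  rw [← Finset.sum_filter, Finset.sum_const, smul_eq_mul]

/- STATEMENT 7 -/
theorem stmt7 {n : ℕ} (hn : 1 ≤ n) (E : EdgeSet n) (hE : IsGraph E)
    (S S' : Finset (Finset (Vtype n)))
    (hS : ∀ A ∈ S, ↑A ⊆ PhiPlus n ∧
      LinearIndependent ℝ (fun x : (A : Set (Vtype n)) => x.1))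
    (hS' : ∀ A ∈ S', ↑A ⊆ PhiPlus n ∧
      LinearIndependent ℝ (fun x : (A : Set (Vtype n)) => x.1))
    (hcov : intrinsicInterior ℝ (RootPoly E) =
      ⋃ A ∈ S, intrinsicInterior ℝ (convexHull ℝ (insert (0 : Vtype n) ↑A)))
    (hcov' : intrinsicInterior ℝ (RootPoly E) =
      ⋃ A ∈ S', intrinsicInterior ℝ (convexHull ℝ (insert (0 : Vtype n) ↑A)))
    (hdisj : (S : Set (Finset (Vtype n))).Pairwise fun A B =>
      Disjoint (intrinsicInterior ℝ (convexHull ℝ (insert (0 : Vtype n) ↑A)))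
        (intrinsicInterior ℝ (convexHull ℝ (insert (0 : Vtype n) ↑B))))
    (hdisj' : (S' : Set (Finset (Vtype n))).Pairwise fun A B =>
      Disjoint (intrinsicInterior ℝ (convexHull ℝ (insert (0 : Vtype n) ↑A)))
        (intrinsicInterior ℝ (convexHull ℝ (insert (0 : Vtype n) ↑B))))
    (i : ℕ) :
    (S.filter fun A => A.card = i).card = (S'.filter fun A => A.card = i).card := by
  induction i using Nat.strong_induction_on with
  | _ i ih =>
    have h1 := total _ S hS hcov hdisj (i+1) (Nat.succ_pos i)
    have h2 := total _ S' hS' hcov' hdisj' (i+1) (Nat.succ_pos i)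
    rw [h1, split_sum, split_sum, Finset.sum_range_succ, Finset.sum_range_succ] at h2
    rw [Finset.sum_congr rfl fun k hk => by rw [ih k (Finset.mem_range.1 hk)]] at h2
    exact Nat.eq_of_mul_eq_mul_right (coef_pos i) (Nat.add_left_cancel h2)


end RPaper
end

section
/- Let F be a forest on the vertex set [n+1]. For every k ≥ 0, all S-reduction trees with root labeled F have the same number of leaves whose label is a graph with exactly k edges; i.e., this number depends only on F and k, not on the choice of S-reduction tree. -/
open scoped BigOperators

namespace RPaper

/-- Finite ternary trees with nodes labeled by graphs on `[n+1]`. -/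
inductive SRTree (n : ℕ) : Type
  | leaf : EdgeSet n → SRTree n
  | node : EdgeSet n → SRTree n → SRTree n → SRTree n → SRTree n

namespace SRTree

def root {n : ℕ} : SRTree n → EdgeSet n
  | leaf E => E
  | node E _ _ _ => E

/-- An S-reduction tree: every internal node's children come from a reduction of its
label, and every leaf is labeled by an alternating graph. -/
def Valid {n : ℕ} : SRTree n → Prop
  | leaf E => Alternating E
  | node E t1 t2 t3 =>
      (∃ i j k : Fin (n+1), i < j ∧ j < k ∧ (i, j) ∈ E ∧ (j, k) ∈ E ∧
        t1.root = red1 E i j k ∧ t2.root = red2 E i j k ∧ t3.root = red3 E i j k) ∧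
      t1.Valid ∧ t2.Valid ∧ t3.Valid

/-- Number of leaves labeled by a graph with exactly `k` edges. -/
def leafCount {n : ℕ} (k : ℕ) : SRTree n → ℕ
  | leaf E => if E.card = k then 1 else 0
  | node _ t1 t2 t3 => leafCount k t1 + leafCount k t2 + leafCount k t3

end SRTree

section Helpers

open SimpleGraph in
theorem sg_nreach {V : Type*} {G : SimpleGraph V} (hG : G.IsAcyclic) {a b c : V}
    (hab : G.Adj a b) (hbc : G.Adj b c) (hac : a ≠ c) :
    ¬ (G.deleteEdges {s(b, c)}).Reachable a c := by
  intro h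
  have hb : G.IsBridge s(b, c) := isAcyclic_iff_forall_isBridge.1 hG (by simpa using hbc)
  rw [isBridge_iff] at hb
  apply hb
  refine Reachable.trans (Adj.reachable ?_) h
  have := hab.ne
  simp only [deleteEdges_adj, Set.mem_singleton_iff, Sym2.eq_iff]
  refine ⟨hab.symm, ?_⟩
  rintro (⟨-, h⟩ | ⟨h1, h2⟩)
  · exact hac h
  · exact this h2

open SimpleGraph in
theorem sg_not_adj {V : Type*} {G : SimpleGraph V} (hG : G.IsAcyclic) {a b c : V}
    (hab : G.Adj a b) (hbc : G.Adj b c) (hac : a ≠ c) : ¬ G.Adj a c := by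
  intro h
  apply sg_nreach hG hab hbc hac
  apply Adj.reachable
  have := hab.ne
  simp only [deleteEdges_adj, Set.mem_singleton_iff, Sym2.eq_iff]
  refine ⟨h, ?_⟩
  rintro (⟨h1, -⟩ | ⟨h1, h2⟩)
  · exact this h1
  · exact hac h1

open SimpleGraph in
theorem sg_acyc {V : Type*} {G : SimpleGraph V} (hG : G.IsAcyclic) {a b c : V}
    (hab : G.Adj a b) (hbc : G.Adj b c) (hac : a ≠ c) :
    (G.deleteEdges {s(b, c)} ⊔ edge a c).IsAcyclic :=
  IsAcyclic.sup_edge_of_not_reachable (sg_nreach hG hab hbc hac) (hG.anti (deleteEdges_le _))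

variable {n : ℕ}

theorem toSG_adj {E : EdgeSet n} {a b : Fin (n+1)} :
    (toSG E).Adj a b ↔ a ≠ b ∧ ((a, b) ∈ E ∨ (b, a) ∈ E) := by
  simp [toSG, SimpleGraph.fromRel_adj]

theorem forest_red1 {E : EdgeSet n} (hE : IsForest E) {i j k : Fin (n+1)} (hij : i < j)
    (hjk : j < k) (h1 : (i, j) ∈ E) (h2 : (j, k) ∈ E) : IsForest (red1 E i j k) := by
  obtain ⟨hg, ha⟩ := hE
  refine ⟨?_, ?_⟩
  · intro e he
    simp only [red1, Finset.mem_insert, Finset.mem_erase] at he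
    rcases he with rfl | ⟨-, he⟩
    · exact hij.trans hjk
    · exact hg e he
  · refine SimpleGraph.IsAcyclic.anti ?_
      (sg_acyc ha (a := i) (b := j) (c := k) (toSG_adj.2 ⟨hij.ne, Or.inl h1⟩)
        (toSG_adj.2 ⟨hjk.ne, Or.inl h2⟩) (hij.trans hjk).ne)
    intro x y hxy
    have hg1 := hg (x, y)
    have hg2 := hg (y, x)
    rw [toSG_adj] at hxy
    simp only [SimpleGraph.sup_adj, SimpleGraph.deleteEdges_adj, Set.mem_singleton_iff, Sym2.eq_iff,
      SimpleGraph.edge_adj, toSG_adj]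
    simp only [red1, Finset.mem_insert, Finset.mem_erase, Prod.mk.injEq, ne_eq] at hxy
    grind

theorem forest_red2 {E : EdgeSet n} (hE : IsForest E) {i j k : Fin (n+1)} (hij : i < j)
    (hjk : j < k) (h1 : (i, j) ∈ E) (h2 : (j, k) ∈ E) : IsForest (red2 E i j k) := by
  obtain ⟨hg, ha⟩ := hE
  refine ⟨?_, ?_⟩
  · intro e he
    simp only [red2, Finset.mem_insert, Finset.mem_erase] at he
    rcases he with rfl | ⟨-, he⟩
    · exact hij.trans hjk
    · exact hg e he
  · refine SimpleGraph.IsAcyclic.anti ?_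
      (sg_acyc ha (a := k) (b := j) (c := i) (toSG_adj.2 ⟨hjk.ne', Or.inr h2⟩)
        (toSG_adj.2 ⟨hij.ne', Or.inr h1⟩) (hij.trans hjk).ne')
    intro x y hxy
    have hg1 := hg (x, y)
    have hg2 := hg (y, x)
    rw [toSG_adj] at hxy
    simp only [SimpleGraph.sup_adj, SimpleGraph.deleteEdges_adj, Set.mem_singleton_iff, Sym2.eq_iff,
      SimpleGraph.edge_adj, toSG_adj]
    simp only [red2, Finset.mem_insert, Finset.mem_erase, Prod.mk.injEq, ne_eq] at hxy
    grind

theorem forest_mono {E E' : EdgeSet n} (hE : IsForest E) (h : E' ⊆ E) : IsForest E' := by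
  refine ⟨fun e he => hE.1 e (h he), SimpleGraph.IsAcyclic.anti ?_ hE.2⟩
  intro x y hxy
  rw [toSG_adj] at *
  exact ⟨hxy.1, hxy.2.imp (fun q => h q) (fun q => h q)⟩

theorem forest_red3 {E : EdgeSet n} (hE : IsForest E) {i j k : Fin (n+1)} (hij : i < j)
    (hjk : j < k) (h1 : (i, j) ∈ E) (h2 : (j, k) ∈ E) : IsForest (red3 E i j k) := by
  refine forest_mono (forest_red1 hE hij hjk h1 h2) ?_
  intro e
  simp only [red1, red3, Finset.mem_insert, Finset.mem_erase]
  tauto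

theorem forest_notMem {E : EdgeSet n} (hE : IsForest E) {i j k : Fin (n+1)} (hij : i < j)
    (hjk : j < k) (h1 : (i, j) ∈ E) (h2 : (j, k) ∈ E) : (i, k) ∉ E := fun h =>
  sg_not_adj hE.2 (toSG_adj.2 ⟨hij.ne, Or.inl h1⟩)
        (toSG_adj.2 ⟨hjk.ne, Or.inl h2⟩) (hij.trans hjk).ne
        (toSG_adj.2 ⟨(hij.trans hjk).ne, Or.inl h⟩)

/-- net outflow -/
def bal (c : Edge n → ℕ) (v : Fin (n+1)) : ℤ := ∑ w, (c (v, w) : ℤ) - ∑ w, (c (w, v) : ℤ)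

/-- total positive part -/
def ht (c : Edge n → ℕ) : ℤ := ∑ v, max (bal c v) 0

/-- positive integer flows supported exactly on `E`, of height `m` -/
def flows (E : EdgeSet n) (m : ℕ) : Set (Edge n → ℕ) :=
  {c | (∀ e, c e ≠ 0 ↔ e ∈ E) ∧ ht c = m}

theorem bal_eq {c c' : Edge n → ℕ} {i j k : Fin (n+1)} (t : ℕ)
    (h : ∀ e, (c e : ℤ) = c' e + t * ((if e = (i, j) then 1 else 0) +
      (if e = (j, k) then 1 else 0) - (if e = (i, k) then 1 else 0))) : bal c = bal c' := by
  have hs : ∀ (a b v : Fin (n+1)),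
      ∑ w, (if (v, w) = (a, b) then (1:ℤ) else 0) = if v = a then 1 else 0 := by
    intro a b v
    by_cases hv : v = a <;> simp [hv]
  have hs' : ∀ (a b v : Fin (n+1)),
      ∑ w, (if (w, v) = (a, b) then (1:ℤ) else 0) = if v = b then 1 else 0 := by
    intro a b v
    by_cases hv : v = b <;> simp [hv]
  funext v
  unfold bal
  simp only [h, Finset.sum_add_distrib, Finset.sum_sub_distrib, ← Finset.mul_sum, hs, hs']
  ring

theorem ht_eq {c c' : Edge n → ℕ} {i j k : Fin (n+1)} (t : ℕ)
    (h : ∀ e, (c e : ℤ) = c' e + t * ((if e = (i, j) then 1 else 0) +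
      (if e = (j, k) then 1 else 0) - (if e = (i, k) then 1 else 0))) : ht c = ht c' := by
  unfold ht
  rw [bal_eq t h]

def fwd (i j k : Fin (n+1)) (c : Edge n → ℕ) (e : Edge n) : ℕ :=
  if e = (i, j) then c (i, j) - c (j, k) else
  if e = (j, k) then c (j, k) - c (i, j) else
  if e = (i, k) then min (c (i, j)) (c (j, k)) else c e

def bwd (i j k : Fin (n+1)) (c : Edge n → ℕ) (e : Edge n) : ℕ :=
  if e = (i, j) then c (i, j) + c (i, k) else
  if e = (j, k) then c (j, k) + c (i, k) else
  if e = (i, k) then 0 else c e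

theorem encard_flows {E : EdgeSet n} (m : ℕ) {i j k : Fin (n+1)} (hij : i < j)
    (hjk : j < k) (h1 : (i, j) ∈ E) (h2 : (j, k) ∈ E) (h3 : (i, k) ∉ E) :
    (flows E m).encard = (flows (red1 E i j k) m).encard + (flows (red2 E i j k) m).encard
      + (flows (red3 E i j k) m).encard := by
  have n1 : (i, j) ≠ (j, k) := by simp [hij.ne]
  have n2 : (i, j) ≠ (i, k) := by simp [hjk.ne]
  have n3 : (j, k) ≠ (i, k) := by simp [hij.ne']
  rw [← Set.encard_union_eq, ← Set.encard_union_eq]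
  · refine Set.encard_congr (Set.BijOn.equiv (fwd i j k) ?_)
    refine Set.InvOn.bijOn (f' := bwd i j k) ⟨?_, ?_⟩ ?_ ?_
    · rintro c ⟨hc, -⟩
      have hd := hc (i, k)
      funext e
      simp only [fwd, bwd]
      grind
    · rintro c hc
      have ha : c (i, j) = 0 ∨ c (j, k) = 0 := by
        rcases hc with (⟨hc, -⟩ | ⟨hc, -⟩) | ⟨hc, -⟩
        · right
          have := hc (j, k)
          simp only [red1, Finset.mem_insert, Finset.mem_erase] at this
          grind
        · left
          have := hc (i, j)
          simp only [red2, Finset.mem_insert, Finset.mem_erase] at this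
          grind
        · left
          have := hc (i, j)
          simp only [red3, Finset.mem_insert, Finset.mem_erase] at this
          grind
      funext e
      simp only [fwd, bwd]
      grind
    · rintro c ⟨hc, hm⟩
      have hd := hc (i, k)
      have hm' : ht (fwd i j k c) = m := by
        rw [← hm]
        symm
        apply ht_eq (i := i) (j := j) (k := k) (min (c (i, j)) (c (j, k)))
        intro e
        simp only [fwd]
        grind
      have ha := (hc (i, j)).2 h1
      have hb := (hc (j, k)).2 h2
      rcases lt_trichotomy (c (i, j)) (c (j, k)) with h | h | h
      · refine Or.inl (Or.inr ⟨?_, hm'⟩)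
        intro e
        have := hc e
        simp only [red2, Finset.mem_insert, Finset.mem_erase, fwd]
        grind
      · refine Or.inr ⟨?_, hm'⟩
        intro e
        have := hc e
        simp only [red3, Finset.mem_insert, Finset.mem_erase, fwd]
        grind
      · refine Or.inl (Or.inl ⟨?_, hm'⟩)
        intro e
        have := hc e
        simp only [red1, Finset.mem_insert, Finset.mem_erase, fwd]
        grind
    · rintro c hc
      have hm' : ht (bwd i j k c) = ht c := by
        apply ht_eq (i := i) (j := j) (k := k) (c (i, k))
        intro e
        simp only [bwd]
        grind
      rcases hc with (⟨hc, hm⟩ | ⟨hc, hm⟩) | ⟨hc, hm⟩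
      · refine ⟨?_, by rw [hm', hm]⟩
        intro e
        have q := hc e
        have q' := hc (i, k)
        simp only [red1, Finset.mem_insert, Finset.mem_erase] at q q'
        simp only [bwd]
        grind
      · refine ⟨?_, by rw [hm', hm]⟩
        intro e
        have q := hc e
        have q' := hc (i, k)
        simp only [red2, Finset.mem_insert, Finset.mem_erase] at q q'
        simp only [bwd]
        grind
      · refine ⟨?_, by rw [hm', hm]⟩
        intro e
        have q := hc e
        have q' := hc (i, k)
        simp only [red3, Finset.mem_insert, Finset.mem_erase] at q q'
        simp only [bwd]
        grind
  · rw [Set.disjoint_left]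
    rintro c hc ⟨hc', -⟩
    have qa := hc' (i, j)
    have qb := hc' (j, k)
    rcases hc with ⟨hc, -⟩ | ⟨hc, -⟩
    · have q := hc (i, j)
      simp only [red1, red3, Finset.mem_insert, Finset.mem_erase] at q qa qb
      grind
    · have q := hc (j, k)
      simp only [red2, red3, Finset.mem_insert, Finset.mem_erase] at q qa qb
      grind
  · rw [Set.disjoint_left]
    rintro c ⟨hc, -⟩ ⟨hc', -⟩
    have qa := hc' (i, j)
    have q := hc (i, j)
    simp only [red1, red2, Finset.mem_insert, Finset.mem_erase] at q qa
    grind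

/-- compositions of `m` into `k` positive parts -/
def comps (k m : ℕ) : Set (Fin k → ℕ) := {x | (∀ i, x i ≠ 0) ∧ ∑ i, x i = m}

theorem comps_finite (k m : ℕ) : (comps k m).Finite := by
  refine (Set.finite_Iic (fun _ : Fin k => m)).subset ?_
  rintro x ⟨-, hx⟩ i
  rw [← hx]
  exact Finset.single_le_sum (f := x) (fun _ _ => Nat.zero_le _) (Finset.mem_univ i)

theorem comps_empty {k m : ℕ} (h : m < k) : comps k m = ∅ := by
  rw [Set.eq_empty_iff_forall_notMem]
  rintro x ⟨h0, hx⟩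
  have : ∑ i : Fin k, 1 ≤ ∑ i, x i := Finset.sum_le_sum fun i _ => Nat.one_le_iff_ne_zero.2 (h0 i)
  simp at this
  omega

theorem comps_self (k : ℕ) : comps k k = {fun _ => 1} := by
  ext x
  constructor
  · rintro ⟨h0, hx⟩
    have h1 : ∀ i ∈ Finset.univ, 1 ≤ x i := fun i _ => Nat.one_le_iff_ne_zero.2 (h0 i)
    have := (Finset.sum_eq_sum_iff_of_le h1).1 (by simp [hx])
    funext i
    exact (this i (Finset.mem_univ i)).symm
  · rintro rfl
    simp [comps]

theorem ht_alt {E : EdgeSet n} (hg : IsGraph E) (hE : Alternating E) {c : Edge n → ℕ}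
    (hc : ∀ e, c e ≠ 0 ↔ e ∈ E) : ht c = ∑ e, (c e : ℤ) := by
  rw [Fintype.sum_prod_type]
  unfold ht
  refine Finset.sum_congr rfl fun v _ => ?_
  unfold bal
  by_cases h : ∃ w, (w, v) ∈ E
  · obtain ⟨u, hu⟩ := h
    have h0 : ∀ w, c (v, w) = 0 := by
      intro w
      by_contra hw
      rw [← ne_eq, hc] at hw
      exact hE ⟨u, v, w, hg _ hu, hg _ hw, hu, hw⟩
    simp only [h0]
    have : (0:ℤ) ≤ ∑ w, (c (w, v) : ℤ) := Finset.sum_nonneg fun _ _ => by positivity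
    simp
    exact_mod_cast this
  · have h0 : ∀ w, c (w, v) = 0 := by
      intro w
      by_contra hw
      rw [← ne_eq, hc] at hw
      exact h ⟨w, hw⟩
    simp only [h0]
    have : (0:ℤ) ≤ ∑ w, (c (v, w) : ℤ) := Finset.sum_nonneg fun _ _ => by positivity
    simp
    exact_mod_cast this

theorem encard_leaf {E : EdgeSet n} (hg : IsGraph E) (hE : Alternating E) (m : ℕ) :
    (flows E m).encard = (comps E.card m).encard := by
  have key : ∀ c : Edge n → ℕ, (∀ e, c e ≠ 0 ↔ e ∈ E) →
      ht c = ((∑ i, c (E.equivFin.symm i).1 : ℕ) : ℤ) := by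
    intro c hc
    rw [ht_alt hg hE hc, E.equivFin.symm.sum_comp (fun e : E => c e.1), Finset.sum_coe_sort E c]
    push_cast
    symm
    apply Finset.sum_subset (Finset.subset_univ _)
    intro e _ he
    have := hc e
    simp only [Nat.cast_eq_zero]
    tauto
  refine Set.encard_congr (Set.BijOn.equiv (fun c i => c (E.equivFin.symm i).1) ?_)
  refine Set.InvOn.bijOn
    (f' := fun x e => if h : e ∈ E then x (E.equivFin ⟨e, h⟩) else 0) ⟨?_, ?_⟩ ?_ ?_
  · rintro c ⟨hc, -⟩
    funext e
    by_cases h : e ∈ E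
    · simp [h]
    · have := hc e
      simp only [h, dite_false]
      tauto
  · rintro x -
    funext i
    simp
  · rintro c ⟨hc, hm⟩
    refine ⟨fun i => (hc _).2 (E.equivFin.symm i).2, ?_⟩
    have := key c hc
    rw [hm] at this
    exact_mod_cast this.symm
  · rintro x ⟨h0, hx⟩
    have hs : ∀ e, (if h : e ∈ E then x (E.equivFin ⟨e, h⟩) else 0) ≠ 0 ↔ e ∈ E := by
      intro e
      by_cases h : e ∈ E <;> simp [h, h0]
    refine ⟨hs, ?_⟩
    rw [key _ hs]
    simp [← hx]

theorem encard_tree (m : ℕ) (R : SRTree n) (hR : R.Valid) (hF : IsForest R.root) :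
    (flows R.root m).encard
      = ∑ k ∈ Finset.range (m+1), (R.leafCount k : ℕ∞) * (comps k m).encard := by
  induction R with
  | leaf E =>
    simp only [SRTree.root, SRTree.leafCount] at *
    rw [encard_leaf hF.1 hR]
    simp only [Nat.cast_ite, Nat.cast_one, Nat.cast_zero, ite_mul, one_mul, zero_mul]
    rw [Finset.sum_ite_eq]
    split_ifs with h
    · rfl
    · rw [comps_empty (by simpa using h)]; simp
  | node E t1 t2 t3 ih1 ih2 ih3 =>
    obtain ⟨⟨i, j, k, hij, hjk, h1, h2, r1, r2, r3⟩, v1, v2, v3⟩ := hR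
    simp only [SRTree.root] at hF
    simp only [SRTree.root, SRTree.leafCount]
    rw [encard_flows m hij hjk h1 h2 (forest_notMem hF hij hjk h1 h2), ← r1, ← r2, ← r3,
      ih1 v1 (r1 ▸ forest_red1 hF hij hjk h1 h2), ih2 v2 (r2 ▸ forest_red2 hF hij hjk h1 h2),
      ih3 v3 (r3 ▸ forest_red3 hF hij hjk h1 h2), ← Finset.sum_add_distrib,
      ← Finset.sum_add_distrib]
    refine Finset.sum_congr rfl fun k _ => ?_
    push_cast
    ring

end Helpers

/- STATEMENT 8 -/
theorem stmt8 {n : ℕ} (hn : 1 ≤ n) (F : EdgeSet n) (hF : IsForest F)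
    (R R' : SRTree n) (hR : R.Valid) (hR' : R'.Valid)
    (hr : R.root = F) (hr' : R'.root = F) (k : ℕ) :
    R.leafCount k = R'.leafCount k := by
  subst hr
  have e1 := fun m => encard_tree m R hR hF
  have e2 := fun m => encard_tree m R' hR' (hr' ▸ hF)
  rw [hr'] at e2
  induction k using Nat.strong_induction_on with
  | _ k ih =>
    have h := (e1 k).symm.trans (e2 k)
    rw [Finset.sum_range_succ, Finset.sum_range_succ, comps_self, Set.encard_singleton, mul_one,
      mul_one, Finset.sum_congr rfl (fun x hx => by rw [ih x (Finset.mem_range.1 hx)])] at h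
    have hfin : ∑ x ∈ Finset.range k, (R'.leafCount x : ℕ∞) * (comps x k).encard
        = ((∑ x ∈ Finset.range k, R'.leafCount x * (comps x k).ncard : ℕ) : ℕ∞) := by
      push_cast
      refine Finset.sum_congr rfl fun x _ => ?_
      rw [(comps_finite x k).cast_ncard_eq]
    rw [hfin] at h
    have h' : (∑ x ∈ Finset.range k, R'.leafCount x * (comps x k).ncard) + R.leafCount k
      = (∑ x ∈ Finset.range k, R'.leafCount x * (comps x k).ncard) + R'.leafCount k := by
      exact_mod_cast h
    exact Nat.add_left_cancel h'

end RPaper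
end

section
/- Let F be a forest on the vertex set [n+1] with l edges, let R be any S-reduction tree with root F, and for 0 ≤ i ≤ l let f_{F,i} be the number of leaves of R whose label has exactly i edges. Then for every positive integer t, #(tP(F) ∩ ℤ^{n+1}) = (−1)^l · Σ_{i=0}^{l} (−1)^i · f_{F,i} · C(t+i, i), where C(t+i, i) is the binomial coefficient. -/
open scoped BigOperators

namespace RPaper

noncomputable def pr {n : ℕ} (φ : Fin (n+1) → ℤ) : Vtype n →ₗ[ℝ] ℝ where
  toFun x := ∑ v, (φ v : ℝ) * x v
  map_add' x y := by simp [mul_add, Finset.sum_add_distrib]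
  map_smul' a x := by
    simp only [Pi.smul_apply, smul_eq_mul, RingHom.id_apply, Finset.mul_sum]
    exact Finset.sum_congr rfl fun v _ => by ring

lemma pr_apply {n : ℕ} (φ : Fin (n+1) → ℤ) (x : Vtype n) :
    pr φ x = ∑ v, (φ v : ℝ) * x v := rfl

lemma pr_ev {n : ℕ} (φ : Fin (n+1) → ℤ) (i j : Fin (n+1)) :
    pr φ (ev i j) = (φ i : ℝ) - φ j := by
  simp [pr_apply, ev, mul_sub, Finset.sum_sub_distrib, Pi.single_apply]

/-- dual-basis property -/
def Dual {n : ℕ} (E : EdgeSet n) : Prop :=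
  ∀ e ∈ E, ∃ φ : Fin (n+1) → ℤ, ∀ f ∈ E, φ f.1 - φ f.2 = if f = e then 1 else 0

lemma Dual.mono {n : ℕ} {E E' : EdgeSet n} (h : Dual E) (hs : E' ⊆ E) : Dual E' := by
  intro e he
  obtain ⟨φ, hφ⟩ := h e (hs he)
  exact ⟨φ, fun f hf => hφ f (hs hf)⟩

lemma pr_sum {n : ℕ} {E : EdgeSet n} {e : Edge n} (he : e ∈ E) {φ : Fin (n+1) → ℤ}
    (hφ : ∀ f ∈ E, φ f.1 - φ f.2 = if f = e then 1 else 0) (c : Edge n → ℝ) :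
    pr φ (∑ f ∈ E, c f • ev f.1 f.2) = c e := by
  rw [map_sum]
  rw [Finset.sum_eq_single e]
  · have := hφ e he
    simp only [if_true] at this
    have h2 : ((φ e.1 : ℝ) - φ e.2) = 1 := by exact_mod_cast this
    rw [map_smul, pr_ev, h2]; simp
  · intro f hf hne
    have := hφ f hf
    simp only [hne, if_false] at this
    have h2 : ((φ f.1 : ℝ) - φ f.2) = 0 := by exact_mod_cast this
    rw [map_smul, pr_ev, h2]; simp
  · intro h; exact absurd he h

lemma dual_of_forest {n : ℕ} {E : EdgeSet n} (h : IsForest E) : Dual E := by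
  classical
  intro e he
  have hadj : ∀ f ∈ E, (toSG E).Adj f.1 f.2 := by
    intro f hf
    simp only [toSG, SimpleGraph.fromRel_adj]
    exact ⟨(h.1 f hf).ne, Or.inl hf⟩
  have hb := (SimpleGraph.isAcyclic_iff_forall_adj_isBridge.1 h.2) (hadj e he)
  rw [SimpleGraph.isBridge_iff] at hb
  set G := (toSG E).deleteEdges {s(e.1, e.2)} with hG
  refine ⟨fun v => if G.Reachable e.1 v then 1 else 0, ?_⟩
  intro f hf
  by_cases hfe : f = e
  · subst hfe
    simp [hb]
  · have hGf : G.Adj f.1 f.2 := by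
      rw [hG, SimpleGraph.deleteEdges_adj]
      refine ⟨hadj f hf, ?_⟩
      simp only [Set.mem_singleton_iff, Sym2.eq_iff]
      rintro (⟨h1, h2⟩ | ⟨h1, h2⟩)
      · exact hfe (Prod.ext h1 h2)
      · have a := h.1 f hf
        have b := h.1 e he
        rw [h1, h2] at a
        exact absurd a b.not_gt
    have : G.Reachable e.1 f.1 ↔ G.Reachable e.1 f.2 :=
      ⟨fun r => r.trans hGf.reachable, fun r => r.trans hGf.reachable.symm⟩
    simp [this, hfe]

/-- integer points of the cone -/
def ZC {n : ℕ} (E : EdgeSet n) : Set (Vtype n) :=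
  {x | ∃ c : Edge n → ℕ, x = ∑ e ∈ E, (c e : ℝ) • ev e.1 e.2}

def LP {n : ℕ} (E : EdgeSet n) (t : ℕ) : Set (Vtype n) :=
  {x | x ∈ ZC E ∧ ∀ φ : Fin (n+1) → ℤ, (∀ v, φ v = 0 ∨ φ v = 1) → pr φ x ≤ t}

lemma zc_insert {n : ℕ} {E : EdgeSet n} {e : Edge n} (he : e ∉ E) (x : Vtype n) :
    x ∈ ZC (insert e E) ↔ ∃ a : ℕ, ∃ y ∈ ZC E, x = (a : ℝ) • ev e.1 e.2 + y := by
  classical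
  constructor
  · rintro ⟨c, rfl⟩
    rw [Finset.sum_insert he]
    exact ⟨c e, _, ⟨c, rfl⟩, rfl⟩
  · rintro ⟨a, y, ⟨c, rfl⟩, rfl⟩
    refine ⟨Function.update c e a, ?_⟩
    rw [Finset.sum_insert he]
    simp only [Function.update_self]
    congr 1
    refine Finset.sum_congr rfl fun f hf => ?_
    rw [Function.update_of_ne]
    rintro rfl; exact he hf

lemma ev_add_s4 {n : ℕ} (i j k : Fin (n+1)) : ev i k = ev i j + ev j k := by
  simp [ev]

lemma pr_zero_of {n : ℕ} {E : EdgeSet n} {φ : Fin (n+1) → ℤ}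
    (h : ∀ f ∈ E, φ f.1 - φ f.2 = 0) {y : Vtype n} (hy : y ∈ ZC E) : pr φ y = 0 := by
  obtain ⟨c, rfl⟩ := hy
  rw [map_sum]
  refine Finset.sum_eq_zero fun f hf => ?_
  have h2 : ((φ f.1 : ℝ) - φ f.2) = 0 := by exact_mod_cast h f hf
  rw [map_smul, pr_ev, h2]; simp

/-- decomposition data of a reduction -/
lemma red_data {n : ℕ} {E : EdgeSet n} (hD : Dual E) {i j k : Fin (n+1)}
    (hij : i < j) (hjk : j < k) (h1 : (i, j) ∈ E) (h2 : (j, k) ∈ E) :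
    ∃ E0 : EdgeSet n, (i, j) ∉ E0 ∧ (j, k) ∉ E0 ∧ (i, k) ∉ E0 ∧ (i, k) ∉ E ∧
      E = insert (i, j) (insert (j, k) E0) ∧
      red1 E i j k = insert (i, k) (insert (i, j) E0) ∧
      red2 E i j k = insert (i, k) (insert (j, k) E0) ∧
      red3 E i j k = insert (i, k) E0 := by
  classical
  have hik : (i, k) ∉ E := by
    intro h
    obtain ⟨φ, hφ⟩ := hD _ h
    have a := hφ _ h
    have b := hφ _ h1
    have c := hφ _ h2
    simp [hij.ne, hjk.ne, hij.ne', hjk.ne'] at a b c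
    omega
  refine ⟨(E.erase (i, j)).erase (j, k), by simp, by simp, by simp [hik], hik, ?_, ?_, ?_, rfl⟩
  · ext f
    simp only [Finset.mem_insert, Finset.mem_erase]
    by_cases a : f = (i, j) <;> by_cases b : f = (j, k) <;> simp_all
  · unfold red1
    congr 1
    ext f
    simp only [Finset.mem_insert, Finset.mem_erase]
    by_cases a : f = (i, j) <;> by_cases b : f = (j, k) <;> simp_all
  · unfold red2
    congr 1
    ext f
    simp only [Finset.mem_insert, Finset.mem_erase]
    by_cases a : f = (i, j) <;> by_cases b : f = (j, k) <;> simp_all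

lemma dual_red1 {n : ℕ} {E : EdgeSet n} (hD : Dual E) {i j k : Fin (n+1)}
    (hij : i < j) (hjk : j < k) (h1 : (i, j) ∈ E) (h2 : (j, k) ∈ E) :
    Dual (red1 E i j k) := by
  classical
  obtain ⟨E0, a1, a2, a3, a4, hE, r1, -, -⟩ := red_data hD hij hjk h1 h2
  obtain ⟨φ, hφ⟩ := hD _ h1
  obtain ⟨ψ, hψ⟩ := hD _ h2
  have nij := hij.ne
  have njk := hjk.ne
  rw [r1]
  have p1 := hφ _ h1
  have p2 := hφ _ h2
  have q1 := hψ _ h1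
  have q2 := hψ _ h2
  simp [nij, njk, nij.symm, njk.symm] at p1 p2 q1 q2
  have h0 : ∀ f ∈ E0, f ∈ E ∧ f ≠ (i, j) ∧ f ≠ (j, k) ∧ f ≠ (i, k) := by
    intro f hf
    refine ⟨by rw [hE]; simp [hf], ?_, ?_, ?_⟩ <;> rintro rfl <;> contradiction
  intro e he
  rw [Finset.mem_insert, Finset.mem_insert] at he
  rcases he with rfl | rfl | he
  · refine ⟨ψ, ?_⟩
    intro f hf
    rw [Finset.mem_insert, Finset.mem_insert] at hf
    rcases hf with rfl | rfl | hf
    · simp; omega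
    · simp [njk]; omega
    · obtain ⟨b1, b2, b3, b4⟩ := h0 f hf
      have := hψ f b1
      simp only [b3, b4, if_false] at this ⊢
      exact this
  · refine ⟨fun v => φ v - ψ v, ?_⟩
    intro f hf
    rw [Finset.mem_insert, Finset.mem_insert] at hf
    rcases hf with rfl | rfl | hf
    · simp [njk.symm]; omega
    · simp; omega
    · obtain ⟨b1, b2, b3, b4⟩ := h0 f hf
      have := hψ f b1
      have := hφ f b1
      simp only [b2, b3, if_false] at *
      omega
  · obtain ⟨c1, c2, c3, c4⟩ := h0 e he
    obtain ⟨χ, hχ⟩ := hD _ c1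
    have s1 := hχ _ h1
    have s2 := hχ _ h2
    rw [if_neg c2.symm] at s1
    rw [if_neg c3.symm] at s2
    refine ⟨χ, ?_⟩
    intro f hf
    rw [Finset.mem_insert, Finset.mem_insert] at hf
    rcases hf with rfl | rfl | hf
    · rw [if_neg c4.symm]; simp at *; omega
    · rw [if_neg c2.symm]; exact s1
    · exact hχ f (h0 f hf).1

lemma dual_red2 {n : ℕ} {E : EdgeSet n} (hD : Dual E) {i j k : Fin (n+1)}
    (hij : i < j) (hjk : j < k) (h1 : (i, j) ∈ E) (h2 : (j, k) ∈ E) :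
    Dual (red2 E i j k) := by
  classical
  obtain ⟨E0, a1, a2, a3, a4, hE, -, r1, -⟩ := red_data hD hij hjk h1 h2
  obtain ⟨φ, hφ⟩ := hD _ h1
  obtain ⟨ψ, hψ⟩ := hD _ h2
  have nij := hij.ne
  have njk := hjk.ne
  rw [r1]
  have p1 := hφ _ h1
  have p2 := hφ _ h2
  have q1 := hψ _ h1
  have q2 := hψ _ h2
  simp [nij, njk, nij.symm, njk.symm] at p1 p2 q1 q2
  have h0 : ∀ f ∈ E0, f ∈ E ∧ f ≠ (i, j) ∧ f ≠ (j, k) ∧ f ≠ (i, k) := by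
    intro f hf
    refine ⟨by rw [hE]; simp [hf], ?_, ?_, ?_⟩ <;> rintro rfl <;> contradiction
  intro e he
  rw [Finset.mem_insert, Finset.mem_insert] at he
  rcases he with rfl | rfl | he
  · refine ⟨φ, ?_⟩
    intro f hf
    rw [Finset.mem_insert, Finset.mem_insert] at hf
    rcases hf with rfl | rfl | hf
    · simp; omega
    · simp [nij.symm]; omega
    · obtain ⟨b1, b2, b3, b4⟩ := h0 f hf
      have := hφ f b1
      simp only [b2, b4, if_false] at this ⊢
      exact this
  · refine ⟨fun v => ψ v - φ v, ?_⟩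
    intro f hf
    rw [Finset.mem_insert, Finset.mem_insert] at hf
    rcases hf with rfl | rfl | hf
    · simp [nij]; omega
    · simp; omega
    · obtain ⟨b1, b2, b3, b4⟩ := h0 f hf
      have := hψ f b1
      have := hφ f b1
      simp only [b2, b3, if_false] at *
      omega
  · obtain ⟨c1, c2, c3, c4⟩ := h0 e he
    obtain ⟨χ, hχ⟩ := hD _ c1
    have s1 := hχ _ h1
    have s2 := hχ _ h2
    rw [if_neg c2.symm] at s1
    rw [if_neg c3.symm] at s2
    refine ⟨χ, ?_⟩
    intro f hf
    rw [Finset.mem_insert, Finset.mem_insert] at hf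
    rcases hf with rfl | rfl | hf
    · rw [if_neg c4.symm]; simp at *; omega
    · rw [if_neg c3.symm]; exact s2
    · exact hχ f (h0 f hf).1

lemma dual_red3 {n : ℕ} {E : EdgeSet n} (hD : Dual E) {i j k : Fin (n+1)}
    (hij : i < j) (hjk : j < k) (h1 : (i, j) ∈ E) (h2 : (j, k) ∈ E) :
    Dual (red3 E i j k) := by
  refine (dual_red1 hD hij hjk h1 h2).mono ?_
  obtain ⟨E0, a1, a2, a3, a4, hE, r1, -, r3⟩ := red_data hD hij hjk h1 h2
  rw [r1, r3]
  exact Finset.insert_subset_insert _ (Finset.subset_insert _ _)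

lemma zc_union {n : ℕ} {E : EdgeSet n} (hD : Dual E) {i j k : Fin (n+1)}
    (hij : i < j) (hjk : j < k) (h1 : (i, j) ∈ E) (h2 : (j, k) ∈ E) (x : Vtype n) :
    x ∈ ZC E ↔ x ∈ ZC (red1 E i j k) ∨ x ∈ ZC (red2 E i j k) := by
  classical
  obtain ⟨E0, a1, a2, a3, a4, hE, r1, r2, -⟩ := red_data hD hij hjk h1 h2
  have n1 : (i, j) ≠ (j, k) := by simp [hij.ne]
  have n2 : (i, k) ≠ (j, k) := by simp [hij.ne]
  have n3 : (i, k) ≠ (i, j) := by simp [hjk.ne']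
  rw [r1, r2, zc_insert (by simp [a3, n3]), zc_insert (by simp [a3, n2])]
  conv_lhs => rw [hE]
  rw [zc_insert (by simp [a1, n1])]
  simp only [zc_insert a1, zc_insert a2, ev_add_s4 i j k]
  constructor
  · rintro ⟨a, y, ⟨b, z, hz, rfl⟩, rfl⟩
    rcases le_total b a with h | h
    · obtain ⟨d, rfl⟩ := Nat.exists_eq_add_of_le h
      refine Or.inl ⟨b, _, ⟨d, z, hz, rfl⟩, ?_⟩
      push_cast; module
    · obtain ⟨d, rfl⟩ := Nat.exists_eq_add_of_le h
      refine Or.inr ⟨a, _, ⟨d, z, hz, rfl⟩, ?_⟩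
      push_cast; module
  · rintro (⟨a, y, ⟨b, z, hz, rfl⟩, rfl⟩ | ⟨a, y, ⟨b, z, hz, rfl⟩, rfl⟩)
    · refine ⟨a + b, _, ⟨a, z, hz, rfl⟩, ?_⟩
      push_cast; module
    · refine ⟨a, _, ⟨a + b, z, hz, rfl⟩, ?_⟩
      push_cast; module

lemma zc_inter {n : ℕ} {E : EdgeSet n} (hD : Dual E) {i j k : Fin (n+1)}
    (hij : i < j) (hjk : j < k) (h1 : (i, j) ∈ E) (h2 : (j, k) ∈ E) (x : Vtype n) :
    x ∈ ZC (red3 E i j k) ↔ x ∈ ZC (red1 E i j k) ∧ x ∈ ZC (red2 E i j k) := by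
  classical
  obtain ⟨E0, a1, a2, a3, a4, hE, r1, r2, r3⟩ := red_data hD hij hjk h1 h2
  have n1 : (i, j) ≠ (j, k) := by simp [hij.ne]
  have n2 : (i, k) ≠ (j, k) := by simp [hij.ne]
  have n3 : (i, k) ≠ (i, j) := by simp [hjk.ne']
  rw [r1, r2, r3, zc_insert a3, zc_insert (by simp [a3, hjk.ne']), zc_insert (by simp [a3, hij.ne])]
  simp only [zc_insert a1, zc_insert a2, ev_add_s4 i j k]
  constructor
  · rintro ⟨a, y, hy, rfl⟩
    exact ⟨⟨a, y, ⟨0, y, hy, by simp⟩, rfl⟩, ⟨a, y, ⟨0, y, hy, by simp⟩, rfl⟩⟩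
  · rintro ⟨⟨a, y, ⟨b, z, hz, rfl⟩, rfl⟩, ⟨a', y', ⟨b', z', hz', rfl⟩, he⟩⟩
    obtain ⟨φ, hφ⟩ := hD _ h1
    obtain ⟨ψ, hψ⟩ := hD _ h2
    have p1 := hφ _ h1
    have p2 := hφ _ h2
    have q1 := hψ _ h1
    have q2 := hψ _ h2
    rw [if_pos rfl] at p1 q2
    rw [if_neg n1.symm] at p2
    rw [if_neg n1] at q1
    have h0 : ∀ f ∈ E0, f ∈ E ∧ f ≠ (i, j) ∧ f ≠ (j, k) := by
      intro f hf
      refine ⟨by rw [hE]; simp [hf], ?_, ?_⟩ <;> rintro rfl <;> contradiction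
    have zφ : ∀ f ∈ E0, φ f.1 - φ f.2 = 0 := fun f hf => by
      rw [hφ f (h0 f hf).1, if_neg (h0 f hf).2.1]
    have zψ : ∀ f ∈ E0, ψ f.1 - ψ f.2 = 0 := fun f hf => by
      rw [hψ f (h0 f hf).1, if_neg (h0 f hf).2.2]
    have e1 := congrArg (pr φ) he
    have e2 := congrArg (pr ψ) he
    have P1 : (φ i : ℝ) - φ j = 1 := by exact_mod_cast p1
    have P2 : (φ j : ℝ) - φ k = 0 := by exact_mod_cast p2
    have Q1 : (ψ i : ℝ) - ψ j = 0 := by exact_mod_cast q1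
    have Q2 : (ψ j : ℝ) - ψ k = 1 := by exact_mod_cast q2
    simp only [map_add, map_smul, pr_ev, pr_zero_of zφ hz, pr_zero_of zφ hz',
      pr_zero_of zψ hz, pr_zero_of zψ hz', P1, P2, Q1, Q2, smul_eq_mul] at e1 e2
    have e1' : a + b = a' := by
      have : ((a + b : ℕ) : ℝ) = (a' : ℕ) := by push_cast; linarith
      exact_mod_cast this
    have e2' : a = a' + b' := by
      have : ((a : ℕ) : ℝ) = (a' + b' : ℕ) := by push_cast; linarith
      exact_mod_cast this
    have hb : b = 0 := by omega
    subst hb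
    exact ⟨a, z, hz, by simp⟩

lemma pr_sum_le {n : ℕ} (E : EdgeSet n) (c : Edge n → ℕ) (φ : Fin (n+1) → ℤ)
    (hφ : ∀ v, φ v = 0 ∨ φ v = 1) :
    pr φ (∑ e ∈ E, (c e : ℝ) • ev e.1 e.2) ≤ ∑ e ∈ E, (c e : ℝ) := by
  rw [map_sum]
  refine Finset.sum_le_sum fun e _ => ?_
  rw [map_smul, pr_ev, smul_eq_mul]
  have : (φ e.1 : ℝ) - φ e.2 ≤ 1 := by
    rcases hφ e.1 with h | h <;> rcases hφ e.2 with h' | h' <;> simp [h, h']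
  nlinarith [(Nat.cast_nonneg (c e) : (0:ℝ) ≤ c e)]

lemma alt_source {n : ℕ} {E : EdgeSet n} (hG : IsGraph E) (hA : Alternating E) :
    ∃ φ : Fin (n+1) → ℤ, (∀ v, φ v = 0 ∨ φ v = 1) ∧
      ∀ c : Edge n → ℕ, pr φ (∑ e ∈ E, (c e : ℝ) • ev e.1 e.2) = ∑ e ∈ E, (c e : ℝ) := by
  classical
  refine ⟨fun v => if ∃ w, (v, w) ∈ E then 1 else 0, fun v => ?_, fun c => ?_⟩
  · by_cases h : ∃ w, (v, w) ∈ E <;> simp [h]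
  · rw [map_sum]
    refine Finset.sum_congr rfl fun e he => ?_
    rw [map_smul, pr_ev, smul_eq_mul]
    have h1 : ∃ w, (e.1, w) ∈ E := ⟨e.2, he⟩
    have h2 : ¬ ∃ w, (e.2, w) ∈ E := by
      rintro ⟨w, hw⟩
      exact hA ⟨e.1, e.2, w, hG e he, hG _ hw, he, hw⟩
    rw [if_pos h1, if_neg h2]
    simp

lemma leaf_count {n : ℕ} {E : EdgeSet n} (hD : Dual E) (hG : IsGraph E)
    (hA : Alternating E) (t : ℕ) :
    (LP E t).Finite ∧ (LP E t).ncard = Nat.choose (t + E.card) E.card := by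
  classical
  set S := (Finset.insertNone E).finsuppAntidiag t with hS
  let F : (Option (Edge n) →₀ ℕ) → Vtype n :=
    fun g => ∑ e ∈ E, (g (some e) : ℝ) • ev e.1 e.2
  have hmem : ∀ g, g ∈ S ↔ (g none + ∑ e ∈ E, g (some e) = t) ∧
      g.support ⊆ Finset.insertNone E := by
    intro g
    rw [hS, Finset.mem_finsuppAntidiag, Finset.sum_insertNone]
  have himg : LP E t = F '' (S : Set (Option (Edge n) →₀ ℕ)) := by
    ext x
    constructor
    · rintro ⟨⟨c, rfl⟩, hx⟩
      obtain ⟨φ, hφ, hc⟩ := alt_source hG hA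
      have hle := hx φ hφ
      rw [hc] at hle
      have hle' : ∑ e ∈ E, c e ≤ t := by exact_mod_cast hle
      let g0 : Option (Edge n) → ℕ := fun o => match o with
        | none => t - ∑ e ∈ E, c e
        | some e => if e ∈ E then c e else 0
      have hsome : ∀ e ∈ E, g0 (some e) = c e := fun e he => by simp [g0, he]
      refine ⟨Finsupp.onFinset (Finset.insertNone E) g0 ?_, ?_, ?_⟩
      · intro o ho
        cases o with
        | none => simp
        | some e =>
          simp only [Finset.some_mem_insertNone]
          by_contra h
          exact ho (by simp [g0, h])
      · rw [Finset.mem_coe, hmem]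
        refine ⟨?_, Finsupp.support_onFinset_subset⟩
        simp only [Finsupp.onFinset_apply]
        rw [Finset.sum_congr rfl hsome]
        exact Nat.sub_add_cancel hle'
      · simp only [F, Finsupp.onFinset_apply]
        exact Finset.sum_congr rfl fun e he => by rw [hsome e he]
    · rintro ⟨g, hg, rfl⟩
      rw [Finset.mem_coe, hmem] at hg
      refine ⟨⟨fun e => g (some e), rfl⟩, fun φ hφ => ?_⟩
      refine (pr_sum_le E (fun e => g (some e)) φ hφ).trans ?_
      have : ∑ e ∈ E, g (some e) ≤ t := by omega
      exact_mod_cast this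
  have hinj : Set.InjOn F (S : Set (Option (Edge n) →₀ ℕ)) := by
    intro g hg g' hg' hgg
    rw [Finset.mem_coe, hmem] at hg hg'
    have key : ∀ e ∈ E, g (some e) = g' (some e) := by
      intro e he
      obtain ⟨φ, hφ⟩ := hD e he
      have := congrArg (pr φ) hgg
      simp only [F] at this
      rw [pr_sum he hφ (fun e => (g (some e) : ℝ)),
        pr_sum he hφ (fun e => (g' (some e) : ℝ))] at this
      exact_mod_cast this
    ext o
    cases o with
    | none =>
      have := Finset.sum_congr rfl key
      omega
    | some e =>
      by_cases he : e ∈ E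
      · exact key e he
      · have a : some e ∉ g.support := fun h => he (by simpa using hg.2 h)
        have b : some e ∉ g'.support := fun h => he (by simpa using hg'.2 h)
        rw [Finsupp.notMem_support_iff] at a b
        rw [a, b]
  rw [himg]
  refine ⟨S.finite_toSet.image _, ?_⟩
  rw [hinj.ncard_image, Set.ncard_coe_finset, hS, Finset.card_finsuppAntidiag_nat_eq_choose,
    Finset.card_insertNone]
  rw [show E.card + 1 + t - 1 = t + E.card by omega]
  exact Nat.choose_symm_of_eq_add rfl

lemma graph_red {n : ℕ} {E : EdgeSet n} (hG : IsGraph E) {i j k : Fin (n+1)}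
    (hij : i < j) (hjk : j < k) :
    IsGraph (red1 E i j k) ∧ IsGraph (red2 E i j k) ∧ IsGraph (red3 E i j k) := by
  refine ⟨?_, ?_, ?_⟩ <;> intro e he <;>
    simp only [red1, red2, red3, Finset.mem_insert, Finset.mem_erase] at he
  · rcases he with rfl | he
    · exact hij.trans hjk
    · exact hG e he.2
  · rcases he with rfl | he
    · exact hij.trans hjk
    · exact hG e he.2
  · rcases he with rfl | he
    · exact hij.trans hjk
    · exact hG e he.2.2

lemma main_count {n : ℕ} (t : ℕ) (R : SRTree n) : R.Valid → Dual R.root → IsGraph R.root →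
    (LP R.root t).Finite ∧ ∀ m, R.root.card ≤ m →
    ((LP R.root t).ncard : ℤ) = (-1) ^ R.root.card * ∑ i ∈ Finset.range (m + 1),
        (-1) ^ i * (R.leafCount i : ℤ) * (Nat.choose (t + i) i : ℤ) := by
  induction R with
  | leaf E =>
    intro hV hD hG
    simp only [SRTree.root] at *
    obtain ⟨hf, hc⟩ := leaf_count hD hG hV t
    refine ⟨hf, fun m hm => ?_⟩
    rw [hc, Finset.sum_eq_single E.card]
    · simp [SRTree.leafCount, ← mul_assoc, ← mul_pow]
    · intro i _ hi
      simp [SRTree.leafCount, hi.symm]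
    · intro h
      simp at h; omega
  | node E t1 t2 t3 ih1 ih2 ih3 =>
    rintro ⟨⟨i, j, k, hij, hjk, h1, h2, e1, e2, e3⟩, v1, v2, v3⟩ hD hG
    simp only [SRTree.root] at hD hG ⊢
    obtain ⟨g1, g2, g3⟩ := graph_red hG hij hjk
    obtain ⟨f1, c1⟩ := ih1 v1 (e1 ▸ dual_red1 hD hij hjk h1 h2) (e1 ▸ g1)
    obtain ⟨f2, c2⟩ := ih2 v2 (e2 ▸ dual_red2 hD hij hjk h1 h2) (e2 ▸ g2)
    obtain ⟨f3, c3⟩ := ih3 v3 (e3 ▸ dual_red3 hD hij hjk h1 h2) (e3 ▸ g3)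
    rw [e1] at f1 c1
    rw [e2] at f2 c2
    rw [e3] at f3 c3
    have hU : LP E t = LP (red1 E i j k) t ∪ LP (red2 E i j k) t := by
      ext x
      simp only [LP, Set.mem_union, Set.mem_setOf_eq, zc_union hD hij hjk h1 h2 x]
      tauto
    have hI : LP (red3 E i j k) t = LP (red1 E i j k) t ∩ LP (red2 E i j k) t := by
      ext x
      simp only [LP, Set.mem_inter_iff, Set.mem_setOf_eq, zc_inter hD hij hjk h1 h2 x]
      tauto
    have n1 : (i, j) ≠ (j, k) := by simp [hij.ne]
    have n2 : (i, k) ≠ (j, k) := by simp [hij.ne]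
    have n3 : (i, k) ≠ (i, j) := by simp [hjk.ne']
    obtain ⟨E0, a1, a2, a3, a4, hE, r1, r2, r3⟩ := red_data hD hij hjk h1 h2
    have k1 : (red1 E i j k).card = E0.card + 2 := by
      rw [r1, Finset.card_insert_of_notMem (by simp [a3, n3]), Finset.card_insert_of_notMem a1]
    have k2 : (red2 E i j k).card = E0.card + 2 := by
      rw [r2, Finset.card_insert_of_notMem (by simp [a3, n2]), Finset.card_insert_of_notMem a2]
    have k3 : (red3 E i j k).card = E0.card + 1 := by
      rw [r3, Finset.card_insert_of_notMem a3]
    have k0 : E.card = E0.card + 2 := by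
      conv_lhs => rw [hE]
      rw [Finset.card_insert_of_notMem (by simp [a1, n1]), Finset.card_insert_of_notMem a2]
    refine ⟨hU ▸ f1.union f2, fun m hm => ?_⟩
    have C1 := c1 m (by omega)
    have C2 := c2 m (by omega)
    have C3 := c3 m (by omega)
    have hcard := Set.ncard_union_add_ncard_inter (LP (red1 E i j k) t) (LP (red2 E i j k) t) f1 f2
    rw [← hU, ← hI] at hcard
    have hcard' : ((LP E t).ncard : ℤ) + (LP (red3 E i j k) t).ncard =
      (LP (red1 E i j k) t).ncard + (LP (red2 E i j k) t).ncard := by exact_mod_cast hcard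
    rw [C1, C2, C3, k1, k2, k3] at hcard'
    rw [k0, eq_sub_of_add_eq hcard']
    simp only [SRTree.leafCount, Nat.cast_add, mul_add, add_mul, Finset.sum_add_distrib]
    ring

lemma zc_single {n : ℕ} {E : EdgeSet n} {e : Edge n} (he : e ∈ E) : ev e.1 e.2 ∈ ZC E := by
  classical
  refine ⟨fun f => if f = e then 1 else 0, ?_⟩
  rw [Finset.sum_eq_single e]
  · simp
  · intro f _ hf; simp [hf]
  · intro h; exact absurd he h

/-- descent to an alternating leaf -/
lemma descent {n : ℕ} (R : SRTree n) : R.Valid → Dual R.root → IsGraph R.root →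
    ∀ x ∈ ZC R.root, ∃ E : EdgeSet n, IsGraph E ∧ Alternating E ∧ ZC E ⊆ ZC R.root ∧
      x ∈ ZC E := by
  induction R with
  | leaf E =>
    intro hV hD hG x hx
    exact ⟨E, hG, hV, subset_rfl, hx⟩
  | node E t1 t2 t3 ih1 ih2 ih3 =>
    rintro ⟨⟨i, j, k, hij, hjk, h1, h2, e1, e2, e3⟩, v1, v2, v3⟩ hD hG x hx
    simp only [SRTree.root] at hD hG hx ⊢
    obtain ⟨g1, g2, g3⟩ := graph_red hG hij hjk
    rcases (zc_union hD hij hjk h1 h2 x).1 hx with h | h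
    · obtain ⟨E', p1, p2, p3, p4⟩ :=
        ih1 v1 (e1 ▸ dual_red1 hD hij hjk h1 h2) (e1 ▸ g1) x (e1 ▸ h)
      refine ⟨E', p1, p2, fun y hy => ?_, p4⟩
      exact (zc_union hD hij hjk h1 h2 y).2 (Or.inl (e1 ▸ p3 hy))
    · obtain ⟨E', p1, p2, p3, p4⟩ :=
        ih2 v2 (e2 ▸ dual_red2 hD hij hjk h1 h2) (e2 ▸ g2) x (e2 ▸ h)
      refine ⟨E', p1, p2, fun y hy => ?_, p4⟩
      exact (zc_union hD hij hjk h1 h2 y).2 (Or.inr (e2 ▸ p3 hy))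

lemma hull_sub {n : ℕ} (E : EdgeSet n) : RootPoly E ⊆ {x | x ∈ cone E ∧
    ∀ φ : Fin (n+1) → ℤ, (∀ v, φ v = 0 ∨ φ v = 1) → pr φ x ≤ 1} := by
  refine convexHull_min ?_ ?_
  · rintro x (hx | ⟨⟨i, j, hij, rfl⟩, hx⟩)
    · rw [Set.mem_singleton_iff] at hx
      subst hx
      exact ⟨⟨fun _ => 0, by simp, by simp⟩, by simp⟩
    · refine ⟨hx, fun φ hφ => ?_⟩
      rw [pr_ev]
      rcases hφ i with h | h <;> rcases hφ j with h' | h' <;> simp [h, h']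
  · rintro x ⟨⟨c, hc, rfl⟩, hx⟩ y ⟨⟨d, hd, rfl⟩, hy⟩ a b ha hb hab
    refine ⟨⟨fun e => a * c e + b * d e,
      fun e => add_nonneg (mul_nonneg ha (hc e)) (mul_nonneg hb (hd e)), ?_⟩, fun φ hφ => ?_⟩
    · rw [Finset.smul_sum, Finset.smul_sum, ← Finset.sum_add_distrib]
      exact Finset.sum_congr rfl fun e _ => by module
    · rw [map_add, map_smul, map_smul, smul_eq_mul, smul_eq_mul]
      nlinarith [hx φ hφ, hy φ hφ]

lemma zc_int {n : ℕ} {E : EdgeSet n} {x : Vtype n} (hx : x ∈ ZC E) (v : Fin (n+1)) :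
    ∃ z : ℤ, x v = z := by
  obtain ⟨c, rfl⟩ := hx
  refine ⟨∑ e ∈ E, (c e : ℤ) * ((Pi.single e.1 1 : Fin (n+1) → ℤ) v -
    (Pi.single e.2 1 : Fin (n+1) → ℤ) v), ?_⟩
  rw [Finset.sum_apply]
  push_cast
  refine Finset.sum_congr rfl fun e _ => ?_
  simp [ev, Pi.single_apply]

lemma lattice_eq {n : ℕ} (R : SRTree n) (hV : R.Valid) (hD : Dual R.root)
    (hG : IsGraph R.root) (t : ℕ) (ht : 0 < t) :
    {x ∈ dilate t (RootPoly R.root) | ∀ i, ∃ z : ℤ, x i = (z : ℝ)} = LP R.root t := by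
  have htr : (0 : ℝ) < t := by exact_mod_cast ht
  ext x
  constructor
  · rintro ⟨⟨p, hp, rfl⟩, hint⟩
    obtain ⟨⟨c, hc, rfl⟩, hle⟩ := hull_sub _ hp
    choose z hz using hint
    constructor
    · have key : ∀ e ∈ R.root, ∃ m : ℕ, (t : ℝ) * c e = m := by
        intro e he
        obtain ⟨φ, hφ⟩ := hD e he
        have h1 := pr_sum he hφ c
        have h2 : pr φ ((t : ℝ) • ∑ e ∈ R.root, c e • ev e.1 e.2) = t * c e := by
          rw [map_smul, h1, smul_eq_mul]
        have h3 : (t : ℝ) * c e = ((∑ v, φ v * z v : ℤ) : ℝ) := by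
          rw [← h2, pr_apply]
          push_cast
          exact Finset.sum_congr rfl fun v _ => by rw [← hz v]
        have h4 : (0 : ℝ) ≤ ((∑ v, φ v * z v : ℤ) : ℝ) := h3 ▸ mul_nonneg htr.le (hc e)
        have h5 : 0 ≤ ∑ v, φ v * z v := by exact_mod_cast h4
        obtain ⟨m, hm⟩ := Int.eq_ofNat_of_zero_le h5
        exact ⟨m, by rw [h3, hm]; simp⟩
      choose! m hm using key
      refine ⟨m, ?_⟩
      simp only
      rw [Finset.smul_sum]
      exact Finset.sum_congr rfl fun e he => by rw [smul_smul, hm e he]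
    · intro φ hφ
      simp only [map_smul, smul_eq_mul]
      nlinarith [hle φ hφ]
  · rintro ⟨hx, hle⟩
    refine ⟨?_, zc_int hx⟩
    obtain ⟨E, gE, aE, sub, hxE⟩ := descent R hV hD hG x hx
    obtain ⟨c, rfl⟩ := hxE
    obtain ⟨φ, hφ, hc⟩ := alt_source gE aE
    have hs := hle φ hφ
    rw [hc] at hs
    refine ⟨∑ e ∈ E, ((c e : ℝ) / t) • ev e.1 e.2, ?_, ?_⟩
    · have hconv : Convex ℝ (RootPoly R.root) := convex_convexHull _ _
      have h0 : (0 : Vtype n) ∈ RootPoly R.root := subset_convexHull _ _ (Or.inl rfl)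
      have hmem : ∀ e ∈ E, ev e.1 e.2 ∈ RootPoly R.root := by
        intro e he
        refine subset_convexHull _ _ (Or.inr ⟨⟨e.1, e.2, gE e he, rfl⟩, ?_⟩)
        obtain ⟨d, hd⟩ := sub (zc_single he)
        exact ⟨fun e => d e, fun e => by positivity, hd⟩
      have hsum : ∑ e ∈ E, (c e : ℝ) / t ≤ 1 := by
        rw [← Finset.sum_div, div_le_one htr]; exact hs
      have := hconv.sum_mem (t := Finset.insertNone E)
        (w := fun o => match o with
          | none => 1 - ∑ e ∈ E, (c e : ℝ) / t
          | some e => (c e : ℝ) / t)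
        (z := fun o => match o with
          | none => 0
          | some e => ev e.1 e.2) ?_ ?_ ?_
      · rw [Finset.sum_insertNone] at this
        simpa using this
      · intro o _
        cases o with
        | none => simpa using hsum
        | some e => simp only; positivity
      · rw [Finset.sum_insertNone]; simp
      · intro o ho
        cases o with
        | none => exact h0
        | some e => exact hmem e (by simpa using ho)
    · simp only
      rw [Finset.smul_sum]
      refine Finset.sum_congr rfl fun e _ => ?_
      rw [smul_smul, mul_div_cancel₀ _ htr.ne']

/- STATEMENT 9 -/
theorem stmt9 {n : ℕ} (hn : 1 ≤ n) (F : EdgeSet n) (hF : IsForest F) (l : ℕ)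
    (hl : F.card = l) (R : SRTree n) (hR : R.Valid) (hr : R.root = F)
    (t : ℕ) (ht : 0 < t) :
    (latticeCount (RootPoly F) t : ℤ) =
      (-1) ^ l * ∑ i ∈ Finset.range (l + 1),
        (-1) ^ i * (R.leafCount i : ℤ) * (Nat.choose (t + i) i : ℤ) := by
  subst hr
  have hD := dual_of_forest hF
  obtain ⟨-, h⟩ := main_count t R hR hD hF.1
  rw [latticeCount, lattice_eq R hR hD hF.1 t ht, h l hl.le, hl]

end RPaper
end
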